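/- arXiv:1605.05131 — 3 statements merged into one kernel-verified Lean document; each statement's English description precedes it below -/
import Mathlib

section
/- A matrix of Mat_n(F) is the sum of two square-zero matrices if and only if each of its invariant factors is an even polynomial or an odd polynomial. -/
open Polynomial

/-- The companion matrix of a monic polynomial of degree `n`. -/
def companion {F : Type*} [Field F] (n : ℕ) (p : Polynomial F) :
    Matrix (Fin n) (Fin n) F := fun i j =>
  if (j : ℕ) = n - 1 then -(p.coeff i)
  else if (i : ℕ) = (j : ℕ) + 1 then 1 else 0

/-- `l` is the list of invariant factors of the square matrix `A`. -/
def IsInvFactors {F : Type*} [Field F] {m : Type*} [Fintype m] [DecidableEq m]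
    (A : Matrix m m F) (l : List (Polynomial F)) : Prop :=
  (∀ p ∈ l, p.Monic) ∧ l.Chain' (fun a b => b ∣ a) ∧
  ∃ e : m ≃ (Σ i : Fin l.length, Fin ((l.get i).natDegree)),
  ∃ P : (Matrix m m F)ˣ,
    A = (P : Matrix m m F) *
        (Matrix.reindex e.symm e.symm
          (Matrix.blockDiagonal' fun i => companion ((l.get i).natDegree) (l.get i))) *
        ((↑P⁻¹ : Matrix m m F))

/-!
For the direct implication, let `T = A + B` and regard the ambient space as an `F[X]`-module `V` on
which `X` acts as `T`. Because each invariant factor divides the previous one, `s i` divides `r` if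
and only if `r • V` is generated by `i` elements (counting invariant factors from `0`), so the
invariant factors can be read off from numbers of generators. Both `A` and `B` commute with `T ^ 2`,
hence preserve `W = T ^ n V` for `n` even; for `n` large, `T` is bijective on `W`. Then
`W = K ⊕ T K` where `K` is the kernel of `A` on `W`, which is stable under `T ^ 2`. So the module
`W` arises from `K`, with `X` acting as `T ^ 2`, by extension of scalars along `X ↦ X ^ 2`, and its
invariant factors are polynomials `t i` in `X ^ 2`. As `(X ^ n * q) • V = q • W`, the condition
`s i ∣ X ^ n * q` is equivalent to `t i ∣ q`, whence `s i` is a power of `X` times `t i`.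

Conversely, the entry `(i, j)` of the companion matrix of an even or odd polynomial vanishes unless
`i + j` is odd. A matrix similar to a direct sum of such blocks thus exchanges the two summands of a
`ℤ/2`-grading, and it is the sum of its restrictions to them, extended by zero, which square to
zero.
-/

section CyclicProd

variable {R M N P : Type*} [CommRing R] [AddCommGroup M] [Module R M] [AddCommGroup N] [Module R N]
  [AddCommGroup P] [Module R P]

theorem nonempty_linearEquiv_of_ker_eq {f : M →ₗ[R] N} {g : M →ₗ[R] P}
    (hf : Function.Surjective f) (hg : Function.Surjective g) (h : ∀ x, f x = 0 ↔ g x = 0) :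
    Nonempty (N ≃ₗ[R] P) :=
  ⟨(f.quotKerEquivOfSurjective hf).symm ≪≫ₗ
    Submodule.quotEquivOfEq f.ker g.ker (Submodule.ext fun x => by simpa using h x) ≪≫ₗ
    g.quotKerEquivOfSurjective hg⟩

/-- The product of the cyclic modules `R ⧸ (s i)`. -/
abbrev CyclicProd {ι : Type*} (s : ι → R) : Type _ :=
  ∀ i, R ⧸ Ideal.span {s i}

/-- The family `v` exhibits `M` as the internal direct sum of the cyclic submodules `R ∙ v i`,
the annihilator of `v i` being `(s i)`. -/
structure IsCyclicDecomposition {ι : Type*} [Fintype ι] (s : ι → R) (v : ι → M) : Prop where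
  span_eq_top : Submodule.span R (Set.range v) = ⊤
  sum_smul_eq_zero_iff : ∀ c : ι → R, ∑ i, c i • v i = 0 ↔ ∀ i, s i ∣ c i

namespace CyclicProd

variable {ι : Type*} {s : ι → R}

/-- The coordinatewise quotient map from the free module. -/
def mk (s : ι → R) : (ι → R) →ₗ[R] CyclicProd s :=
  LinearMap.pi fun i => (Ideal.span {s i}).mkQ ∘ₗ LinearMap.proj i

theorem mk_surjective (s : ι → R) : Function.Surjective (mk s) := fun y =>
  ⟨fun i => (y i).out, funext fun i => (y i).out_eq'⟩

theorem mk_eq_zero_iff {c : ι → R} : mk s c = 0 ↔ ∀ i, s i ∣ c i := by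
  simp only [funext_iff, ← Ideal.mem_span_singleton]
  exact forall_congr' fun i => Ideal.Quotient.eq_zero_iff_mem

theorem isCyclicDecomposition [Fintype ι] [DecidableEq ι] (e : CyclicProd s ≃ₗ[R] M) :
    IsCyclicDecomposition s fun i => e (mk s (Pi.single i 1)) := by
  have h : Fintype.linearCombination R (fun i => e (mk s (Pi.single i 1))) =
      e.toLinearMap ∘ₗ mk s := by
    ext i
    simp
  refine ⟨?_, fun c => ?_⟩
  · rw [← Fintype.range_linearCombination, h, LinearMap.range_eq_top]
    exact e.surjective.comp (mk_surjective s)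
  · rw [← Fintype.linearCombination_apply, h, ← mk_eq_zero_iff]
    exact e.map_eq_zero_iff

end CyclicProd

theorem IsCyclicDecomposition.nonempty_equiv {ι : Type*} [Fintype ι] {s : ι → R} {v : ι → M}
    (h : IsCyclicDecomposition s v) : Nonempty (M ≃ₗ[R] CyclicProd s) :=
  nonempty_linearEquiv_of_ker_eq (f := Fintype.linearCombination R v)
    (LinearMap.range_eq_top.mp (by rw [Fintype.range_linearCombination, h.span_eq_top]))
    (CyclicProd.mk_surjective s) fun c => by
    rw [Fintype.linearCombination_apply, h.sum_smul_eq_zero_iff, CyclicProd.mk_eq_zero_iff]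

end CyclicProd

section Existence

variable {R : Type*} [CommRing R]

theorem nonempty_quotient_prod_equiv_of_isCoprime {a b : R} (hab : IsCoprime a b) (g : R) :
    Nonempty (((R ⧸ Ideal.span {g * a}) × (R ⧸ Ideal.span {g * b})) ≃ₗ[R]
      (R ⧸ Ideal.span {g * (a * b)}) × (R ⧸ Ideal.span {g})) := by
  obtain ⟨u, v, huv⟩ := hab
  let mk₂ (c d : R) := (Ideal.span {c}).mkQ.prodMap (Ideal.span {d}).mkQ
  have mk₂_surjective (c d : R) : Function.Surjective (mk₂ c d) :=
    Prod.map_surjective.mpr ⟨Submodule.mkQ_surjective _, Submodule.mkQ_surjective _⟩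
  have mk₂_eq_zero_iff (c d : R) (p : R × R) : mk₂ c d p = 0 ↔ c ∣ p.1 ∧ d ∣ p.2 := by
    simp [mk₂, Prod.ext_iff, Ideal.Quotient.eq_zero_iff_mem, Ideal.mem_span_singleton]
  -- a change of basis of `R × R`, of determinant `-1` by coprimality
  let B : R × R →ₗ[R] R × R :=
    (a • LinearMap.snd R R R - b • LinearMap.fst R R R).prod
      (u • LinearMap.fst R R R + v • LinearMap.snd R R R)
  have B_apply (p : R × R) : B p = (a * p.2 - b * p.1, u * p.1 + v * p.2) := rfl
  have B_surjective : Function.Surjective B := fun p =>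
    ⟨(a * p.2 - v * p.1, b * p.2 + u * p.1), by
      ext <;> simp only [B_apply]
      · linear_combination p.1 * huv
      · linear_combination p.2 * huv⟩
  refine nonempty_linearEquiv_of_ker_eq (mk₂_surjective _ _)
    (g := mk₂ _ _ ∘ₗ B) ((mk₂_surjective _ _).comp B_surjective) fun p => ?_
  rw [LinearMap.comp_apply, mk₂_eq_zero_iff, mk₂_eq_zero_iff, B_apply]
  constructor
  · rintro ⟨⟨c, hc⟩, d, hd⟩
    exact ⟨⟨d - c, by linear_combination a * hd - b * hc⟩,
      ⟨u * a * c + v * b * d, by linear_combination u * hc + v * hd⟩⟩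
  · rintro ⟨⟨e, he⟩, f, hf⟩
    exact ⟨⟨f - v * b * e, by linear_combination a * hf - v * he - p.1 * huv⟩,
      ⟨u * a * e + f, by linear_combination u * he + b * hf - p.2 * huv⟩⟩

theorem nonempty_quotient_prod_equiv_lcm_gcd [IsDomain R] [IsBezout R] [GCDMonoid R] {a : R}
    (ha : a ≠ 0) (b : R) :
    Nonempty (((R ⧸ Ideal.span {a}) × (R ⧸ Ideal.span {b})) ≃ₗ[R]
      (R ⧸ Ideal.span {lcm a b}) × (R ⧸ Ideal.span {gcd a b})) := by
  obtain ⟨a', b', ha', hb', hunit⟩ := extract_gcd a b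
  have hg : gcd a b ≠ 0 := fun h => ha ((gcd_eq_zero_iff a b).mp h).1
  have hlcm : Associated (gcd a b * (a' * b')) (lcm a b) := by
    refine Associated.of_mul_left (a := gcd a b) (c := gcd a b) ?_ (.refl _) hg
    calc gcd a b * (gcd a b * (a' * b')) = a * b := by
          rw [← mul_assoc, mul_mul_mul_comm, ← ha', ← hb']
      Associated _ (gcd a b * lcm a b) := (gcd_mul_lcm a b).symm
  have h := nonempty_quotient_prod_equiv_of_isCoprime ((gcd_isUnit_iff a' b').mp hunit) (gcd a b)
  rwa [← ha', ← hb', Ideal.span_singleton_eq_span_singleton.mpr hlcm] at h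

/-- Inserts `a` into the divisibility chain `l`: the new list is again a divisibility chain, with
the same product of cyclic modules `R ⧸ (s)`. -/
def insertFactor {α : Type*} [CommMonoidWithZero α] [NormalizedGCDMonoid α] (a : α) :
    List α → List α
  | [] => [normalize a]
  | s :: l => lcm a s :: insertFactor (gcd a s) l

section insertFactor

variable {α : Type*} [CommMonoidWithZero α] [NormalizedGCDMonoid α] {a : α} {l : List α}

theorem dvd_of_mem_insertFactor {b : α} (ha : a ∣ b) (hl : ∀ s ∈ l, s ∣ b) :
    ∀ s ∈ insertFactor a l, s ∣ b := by
  induction l generalizing a with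
  | nil => simpa only [insertFactor, List.forall_mem_singleton, normalize_dvd_iff] using ha
  | cons s l ih =>
    rw [List.forall_mem_cons] at hl
    rw [insertFactor, List.forall_mem_cons]
    exact ⟨lcm_dvd ha hl.1, ih ((gcd_dvd_left a s).trans ha) hl.2⟩

theorem pairwise_insertFactor (a : α) (hl : l.Pairwise fun s t => t ∣ s) :
    (insertFactor a l).Pairwise fun s t => t ∣ s := by
  induction l generalizing a with
  | nil => exact List.pairwise_singleton _ _
  | cons s l ih =>
    rw [List.pairwise_cons] at hl
    refine .cons (dvd_of_mem_insertFactor ?_ fun t ht => ?_) (ih _ hl.2)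
    · exact (gcd_dvd_right a s).trans (dvd_lcm_right a s)
    · exact (hl.1 t ht).trans (dvd_lcm_right a s)

theorem ne_zero_and_normalize_eq_of_mem_insertFactor (ha : a ≠ 0)
    (hl : ∀ s ∈ l, s ≠ 0 ∧ normalize s = s) :
    ∀ s ∈ insertFactor a l, s ≠ 0 ∧ normalize s = s := by
  induction l generalizing a with
  | nil => simpa [insertFactor] using ha
  | cons s l ih =>
    rw [List.forall_mem_cons] at hl
    rw [insertFactor, List.forall_mem_cons]
    exact ⟨⟨fun h => ((lcm_eq_zero_iff a s).mp h).elim ha hl.1.1, normalize_lcm a s⟩,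
      ih (fun h => ha ((gcd_eq_zero_iff a s).mp h).1) hl.2⟩

end insertFactor

/-- Splits off the first factor. -/
def CyclicProd.consEquiv {n : ℕ} (s : Fin (n + 1) → R) :
    CyclicProd s ≃ₗ[R] (R ⧸ Ideal.span {s 0}) × CyclicProd fun i : Fin n => s i.succ :=
  (Fin.consLinearEquiv R fun i => R ⧸ Ideal.span {s i}).symm

variable [IsDomain R] [IsBezout R] [NormalizedGCDMonoid R]

theorem nonempty_prod_cyclicProd_equiv_insertFactor {a : R} (ha : a ≠ 0) (l : List R) :
    Nonempty (((R ⧸ Ideal.span {a}) × CyclicProd l.get) ≃ₗ[R]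
      CyclicProd (insertFactor a l).get) := by
  induction l generalizing a with
  | nil =>
    have h := Ideal.span_singleton_eq_span_singleton.mpr (associated_normalize a)
    exact ⟨(Submodule.quotEquivOfEq _ _ h).prodCongr (.refl R _) ≪≫ₗ
      (CyclicProd.consEquiv [normalize a].get).symm⟩
  | cons s l ih =>
    obtain ⟨e⟩ := nonempty_quotient_prod_equiv_lcm_gcd ha s
    obtain ⟨e'⟩ := ih fun h => ha ((gcd_eq_zero_iff a s).mp h).1
    exact ⟨(LinearEquiv.refl R _).prodCongr (CyclicProd.consEquiv (s :: l).get) ≪≫ₗ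
      (LinearEquiv.prodAssoc R _ _ _).symm ≪≫ₗ e.prodCongr (.refl R _) ≪≫ₗ
      LinearEquiv.prodAssoc R _ _ _ ≪≫ₗ (LinearEquiv.refl R _).prodCongr e' ≪≫ₗ
      (CyclicProd.consEquiv (insertFactor a (s :: l)).get).symm⟩

theorem exists_pairwise_dvd_nonempty_cyclicProd_equiv {n : ℕ} (a : Fin n → R) (ha : ∀ i, a i ≠ 0) :
    ∃ l : List R, (∀ s ∈ l, s ≠ 0 ∧ normalize s = s) ∧ (l.Pairwise fun s t => t ∣ s) ∧
      Nonempty (CyclicProd a ≃ₗ[R] CyclicProd l.get) := by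
  induction n with
  | zero =>
    rw [Subsingleton.elim a [].get]
    exact ⟨[], by simp, .nil, ⟨LinearEquiv.refl R _⟩⟩
  | succ n ih =>
    obtain ⟨l, hl, hchain, ⟨e⟩⟩ := ih (fun i => a i.succ) fun i => ha i.succ
    obtain ⟨e'⟩ := nonempty_prod_cyclicProd_equiv_insertFactor (ha 0) l
    exact ⟨insertFactor (a 0) l, ne_zero_and_normalize_eq_of_mem_insertFactor (ha 0) hl,
      pairwise_insertFactor (a 0) hchain,
      ⟨CyclicProd.consEquiv a ≪≫ₗ (LinearEquiv.refl R _).prodCongr e ≪≫ₗ e'⟩⟩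

end Existence

theorem exists_invariant_factors {R M : Type*} [CommRing R] [IsDomain R] [IsPrincipalIdealRing R]
    [NormalizedGCDMonoid R] [AddCommGroup M] [Module R M] [Module.Finite R M]
    (hM : Module.IsTorsion R M) :
    ∃ l : List R, (∀ s ∈ l, s ≠ 0 ∧ normalize s = s) ∧ (l.Pairwise fun s t => t ∣ s) ∧
      Nonempty (M ≃ₗ[R] CyclicProd l.get) := by
  classical
  obtain ⟨ι, _, p, hp, k, ⟨e⟩⟩ := Module.equiv_directSum_of_isTorsion hM
  let r := Fintype.equivFin ι
  obtain ⟨l, hl, hchain, ⟨e'⟩⟩ := exists_pairwise_dvd_nonempty_cyclicProd_equiv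
    (fun i => p (r.symm i) ^ k (r.symm i)) fun i => pow_ne_zero _ (hp _).ne_zero
  exact ⟨l, hl, hchain, ⟨e ≪≫ₗ DirectSum.linearEquivFunOnFintype R ι _ ≪≫ₗ
    (LinearEquiv.piCongrLeft R (fun i => R ⧸ Ideal.span {p i ^ k i}) r.symm).symm ≪≫ₗ e'⟩⟩

section GeneratedModTorsion

open Submodule

variable {R M N : Type*} [CommRing R] [AddCommGroup M] [Module R M] [AddCommGroup N] [Module R N]

/-- `M` is generated by `k` elements together with its `r`-torsion; equivalently, `r • M` is
generated by `k` elements. -/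
def GeneratedModTorsionBy (R M : Type*) [CommRing R] [AddCommGroup M] [Module R M] (r : R)
    (k : ℕ) : Prop :=
  ∃ x : Fin k → M, span R (Set.range x) ⊔ torsionBy R M r = ⊤

namespace GeneratedModTorsionBy

theorem congr_of_surjective {c : R} {f : M →ₗ[R] N} (hf : Function.Surjective f)
    (hker : f.ker = torsionBy R M c) (r : R) (k : ℕ) :
    GeneratedModTorsionBy R M (c * r) k ↔ GeneratedModTorsionBy R N r k := by
  have comap_torsion : (torsionBy R N r).comap f = torsionBy R M (c * r) := by
    ext x
    rw [mem_comap, mem_torsionBy_iff, ← map_smul, ← LinearMap.mem_ker, hker, mem_torsionBy_iff,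
      mem_torsionBy_iff, mul_smul]
  have key (x : Fin k → M) : span R (Set.range x) ⊔ torsionBy R M (c * r) = ⊤ ↔
      span R (Set.range (f ∘ x)) ⊔ torsionBy R N r = ⊤ := by
    conv_rhs => rw [← map_comap_eq_of_surjective hf (torsionBy R N r), Set.range_comp, ← map_span,
      ← Submodule.map_sup, LinearMap.map_eq_top_iff (LinearMap.range_eq_top.mpr hf)]
    rw [comap_torsion, sup_assoc, sup_eq_left.mpr (hker.trans_le ?_)]
    exact torsionBy_le_torsionBy_of_dvd _ _ (dvd_mul_right c r)
  refine ⟨fun ⟨x, hx⟩ => ⟨f ∘ x, (key x).mp hx⟩, fun ⟨y, hy⟩ => ?_⟩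
  choose x hx using fun i => hf (y i)
  exact ⟨x, (key x).mpr (by rwa [show f ∘ x = y from funext hx])⟩

theorem congr (e : M ≃ₗ[R] N) (r : R) (k : ℕ) :
    GeneratedModTorsionBy R M r k ↔ GeneratedModTorsionBy R N r k := by
  simpa only [one_mul] using
    congr_of_surjective (c := 1) (f := e.toLinearMap) e.surjective (by simp) r k

theorem card_le_of_surjective {r : R} {k : ℕ} (h : GeneratedModTorsionBy R M r k) {I : Ideal R}
    (hI : I ≠ ⊤) {κ : Type*} [Fintype κ] {f : M →ₗ[R] κ → R ⧸ I} (hf : Function.Surjective f)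
    (hker : torsionBy R M r ≤ f.ker) : Fintype.card κ ≤ k := by
  obtain ⟨x, hx⟩ := h
  have : Nontrivial (R ⧸ I) := Ideal.Quotient.nontrivial_iff.mpr hI
  have span_R : span R (Set.range (f ∘ x)) = ⊤ := by
    rw [Set.range_comp, ← map_span, LinearMap.map_eq_top_iff (LinearMap.range_eq_top.mpr hf),
      eq_top_iff, ← hx]
    exact sup_le_sup_left hker _
  rw [← restrictScalars_span R (R ⧸ I) Ideal.Quotient.mk_surjective, restrictScalars_eq_top_iff,
    ← Fintype.range_linearCombination, LinearMap.range_eq_top] at span_R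
  simpa using _root_.card_le_of_surjective (R ⧸ I) _ span_R

variable {n : ℕ} {s : Fin n → R}

theorem cyclicProd_of_dvd {r : R} {k : ℕ} (hr : ∀ j : Fin n, k ≤ j → s j ∣ r) :
    GeneratedModTorsionBy R (CyclicProd s) r k := by
  let v (j : Fin n) : CyclicProd s := CyclicProd.mk s (Pi.single j 1)
  refine ⟨fun j => if hj : (j : ℕ) < n then v ⟨j, hj⟩ else 0, ?_⟩
  rw [eq_top_iff, ← (CyclicProd.isCyclicDecomposition (.refl R (CyclicProd s))).span_eq_top,
    span_le, Set.range_subset_iff]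
  intro j
  rcases lt_or_ge (j : ℕ) k with hj | hj
  · exact mem_sup_left (subset_span ⟨⟨j, hj⟩, dif_pos j.2⟩)
  · refine mem_sup_right ?_
    rw [mem_torsionBy_iff, LinearEquiv.refl_apply, ← map_smul, CyclicProd.mk_eq_zero_iff]
    intro j'
    obtain rfl | hj' := eq_or_ne j' j
    · simpa using hr j' hj
    · simp [hj']

theorem dvd_of_cyclicProd (hs : ∀ i j, i ≤ j → s j ∣ s i) {i : Fin n} {r : R}
    (h : GeneratedModTorsionBy R (CyclicProd s) r i) : s i ∣ r := by
  by_contra hr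
  -- The first `i + 1` factors surject onto copies of `R ⧸ (s i : r)`, and this kills `r`-torsion.
  let I : Ideal R := Submodule.comap (LinearMap.mulLeft R r) (Ideal.span {s i})
  have mem_I (c : R) : c ∈ I ↔ s i ∣ r * c := Ideal.mem_span_singleton
  have le_I (j : Set.Iic i) : Ideal.span {s j} ≤ I := by
    rw [Ideal.span_singleton_le_iff_mem, mem_I]
    exact (hs j i j.2).mul_left r
  let f : CyclicProd s →ₗ[R] Set.Iic i → R ⧸ I :=
    LinearMap.pi fun j => factor (le_I j) ∘ₗ LinearMap.proj (j : Fin n)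
  have f_mk (c : Fin n → R) (j : Set.Iic i) : f (CyclicProd.mk s c) j = I.mkQ (c j) := rfl
  refine absurd (h.card_le_of_surjective (f := f) ((Ideal.ne_top_iff_one I).mpr ?_) ?_ ?_) ?_
  · rwa [mem_I, mul_one]
  · intro y
    refine ⟨CyclicProd.mk s fun j => if hj : j ∈ Set.Iic i then (y ⟨j, hj⟩).out else 0, ?_⟩
    funext j
    rw [f_mk, dif_pos j.2]
    exact (y j).out_eq'
  · intro y hy
    obtain ⟨c, rfl⟩ := CyclicProd.mk_surjective s y
    rw [mem_torsionBy_iff, ← map_smul, CyclicProd.mk_eq_zero_iff] at hy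
    funext j
    rw [f_mk, Pi.zero_apply, mkQ_apply, Quotient.mk_eq_zero, mem_I]
    exact (hs j i j.2).trans (hy j)
  · simp

theorem cyclicProd_iff_dvd (hs : ∀ i j, i ≤ j → s j ∣ s i) (i : Fin n) (r : R) :
    GeneratedModTorsionBy R (CyclicProd s) r i ↔ s i ∣ r :=
  ⟨dvd_of_cyclicProd hs, fun hr => cyclicProd_of_dvd fun j hj => (hs i j hj).trans hr⟩

end GeneratedModTorsionBy

end GeneratedModTorsion

section Doubling

variable {R S K M : Type*} [CommRing R] [CommRing S] [AddCommGroup K] [Module R K]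
  [AddCommGroup M] [Module S M] {f : R →+* S} {x : S}

theorem map_dvd_add_mul_map_iff (hf : Function.Bijective fun p : R × R => f p.1 + x * f p.2)
    {r a b : R} : f r ∣ f a + x * f b ↔ r ∣ a ∧ r ∣ b := by
  constructor
  · rintro ⟨d, hd⟩
    obtain ⟨⟨a', b'⟩, rfl⟩ := hf.2 d
    have hab : (a, b) = (r * a', r * b') := hf.1 (by
      simp only [map_mul]
      linear_combination hd)
    rw [Prod.mk.injEq] at hab
    exact ⟨⟨a', hab.1⟩, b', hab.2⟩
  · rintro ⟨ha, hb⟩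
    exact dvd_add (map_dvd f ha) ((map_dvd f hb).mul_left x)

/-- If `S` is free over `R` with basis `1, x`, and `M` is obtained from `K` by extension of
scalars, then cyclic decompositions of `K` extend to `M`. -/
theorem IsCyclicDecomposition.map_of_bijective {ι : Type*} [Fintype ι] {r : ι → R} {u : ι → K}
    (h : IsCyclicDecomposition r u) (hf : Function.Bijective fun p : R × R => f p.1 + x * f p.2)
    {g : K →ₛₗ[f] M} (hg : Function.Bijective fun p : K × K => g p.1 + x • g p.2) :
    IsCyclicDecomposition (fun i => f (r i)) fun i => g (u i) := by
  constructor
  · have g_mem (k : K) : g k ∈ Submodule.span S (Set.range fun i => g (u i)) := by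
      have hk : k ∈ Submodule.span R (Set.range u) := h.span_eq_top ▸ Submodule.mem_top
      obtain ⟨c, rfl⟩ := (Submodule.mem_span_range_iff_exists_fun R).mp hk
      simp only [map_sum, map_smulₛₗ]
      exact Submodule.sum_mem _ fun i _ =>
        Submodule.smul_mem _ _ (Submodule.subset_span (Set.mem_range_self i))
    rw [eq_top_iff]
    intro m _
    obtain ⟨⟨k, k'⟩, rfl⟩ := hg.2 m
    exact Submodule.add_mem _ (g_mem k) (Submodule.smul_mem _ x (g_mem k'))
  · intro c
    obtain ⟨p, rfl⟩ : ∃ p : ι → R × R, (fun i => f (p i).1 + x * f (p i).2) = c :=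
      ⟨fun i => (hf.2 (c i)).choose, funext fun i => (hf.2 (c i)).choose_spec⟩
    have sum_eq : ∑ i, (f (p i).1 + x * f (p i).2) • g (u i) =
        g (∑ i, (p i).1 • u i) + x • g (∑ i, (p i).2 • u i) := by
      simp only [map_sum, map_smulₛₗ, Finset.smul_sum, ← Finset.sum_add_distrib, add_smul, mul_smul]
    have add_eq_zero_iff (k k' : K) : g k + x • g k' = 0 ↔ k = 0 ∧ k' = 0 := by
      rw [← Prod.mk_eq_zero, ← hg.1.eq_iff]
      simp
    simp only [sum_eq, add_eq_zero_iff, h.sum_smul_eq_zero_iff, ← forall_and,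
      map_dvd_add_mul_map_iff hf]

theorem expand_two_add_X_mul_bijective (R : Type*) [CommSemiring R] :
    Function.Bijective fun p : R[X] × R[X] => expand R 2 p.1 + X * expand R 2 p.2 := by
  have coeff_even (p q : R[X]) (n : ℕ) :
      (expand R 2 p + X * expand R 2 q).coeff (2 * n) = p.coeff n := by
    rw [coeff_add, coeff_expand_mul' two_pos]
    rcases n with _ | n
    · simp
    · rw [mul_add_one, coeff_X_mul, coeff_expand two_pos, if_neg (by omega), add_zero]
  have coeff_odd (p q : R[X]) (n : ℕ) :
      (expand R 2 p + X * expand R 2 q).coeff (2 * n + 1) = q.coeff n := by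
    rw [coeff_add, coeff_X_mul, coeff_expand_mul' two_pos, coeff_expand two_pos,
      if_neg (by omega), zero_add]
  constructor
  · rintro ⟨p, q⟩ ⟨p', q'⟩ h
    dsimp only at h
    refine Prod.ext (Polynomial.ext fun n => ?_) (Polynomial.ext fun n => ?_)
    · rw [← coeff_even p q, h, coeff_even]
    · rw [← coeff_odd p q, h, coeff_odd]
  · intro s
    refine ⟨(contract 2 s, contract 2 s.divX), Polynomial.ext fun n => ?_⟩
    obtain ⟨n, rfl | rfl⟩ := Nat.even_or_odd' n
    · rw [coeff_even, coeff_contract two_ne_zero, mul_comm]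
    · rw [coeff_odd, coeff_contract two_ne_zero, coeff_divX, mul_comm]

end Doubling

section SquareZero

open Module Submodule

theorem commute_add_sq_of_mul_self_eq_zero {A : Type*} [Ring A] {a b : A} (ha : a * a = 0)
    (hb : b * b = 0) : Commute a ((a + b) ^ 2) := by
  have h : (a + b) ^ 2 = a * b + b * a := by
    rw [sq, add_mul, mul_add, mul_add, ha, hb, zero_add, add_zero]
  rw [h, Commute, SemiconjBy, mul_add, add_mul, ← mul_assoc, ha, mul_assoc b, ha, zero_mul,
    mul_zero, zero_add, add_zero, mul_assoc]

variable {R V K : Type*} [CommRing R] [AddCommGroup V] [Module R V] [AddCommGroup K] [Module R K]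

theorem bijective_add_apply_of_mul_self_eq_zero {a b : End R V} (ha : a * a = 0) (hb : b * b = 0)
    (hT : Function.Bijective (a + b)) :
    Function.Bijective fun p : a.ker × a.ker => (p.1 : V) + (a + b) p.2 := by
  have aa (x : V) : a (a x) = 0 := LinearMap.congr_fun ha x
  have bb (x : V) : b (b x) = 0 := LinearMap.congr_fun hb x
  have eq_zero {x : V} : (a + b) x = 0 → x = 0 := (map_eq_zero_iff _ hT.1).mp
  constructor
  · refine (injective_iff_map_eq_zero
      (a.ker.subtype.coprod ((a + b) ∘ₗ a.ker.subtype))).mpr ?_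
    rintro ⟨⟨k, hk⟩, ⟨k', hk'⟩⟩ h
    have hsum : k + b k' = 0 := by simpa [LinearMap.mem_ker.mp hk'] using h
    have hbk : b k = 0 := by simpa [bb] using congrArg b hsum
    have hk0 : k = 0 := eq_zero (by
      rw [LinearMap.add_apply, LinearMap.mem_ker.mp hk, hbk, add_zero])
    have hk0' : k' = 0 := eq_zero (by
      rw [LinearMap.add_apply, LinearMap.mem_ker.mp hk', zero_add, ← hsum, hk0, zero_add])
    subst hk0 hk0'
    rfl
  · intro x
    obtain ⟨y, rfl⟩ := hT.2 x
    obtain ⟨w, hw⟩ := hT.2 (b y)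
    have haw : a w = 0 := eq_zero (by
      simpa [aa, bb] using congrArg b hw)
    exact ⟨(⟨a y, aa y⟩, ⟨w, haw⟩), congrArg (a y + ·) hw⟩

/-- A linear map intertwining `φ` with `ψ ^ n`, as a map of polynomial modules that is semilinear
with respect to the substitution `X ↦ X ^ n`. -/
noncomputable def aevalExpandMap (n : ℕ) (φ : End R K) (ψ : End R V) (j : K →ₗ[R] V)
    (hj : ∀ k, j (φ k) = (ψ ^ n) (j k)) :
    AEval' φ →ₛₗ[(expand R n : R[X] →+* R[X])] AEval' ψ where
  toFun k := AEval'.of ψ (j ((AEval'.of φ).symm k))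
  map_add' k k' := by simp
  map_smul' p k := by
    obtain ⟨k, rfl⟩ := (AEval'.of φ).surjective k
    have key : j (aeval φ p k) = aeval ψ (expand R n p) (j k) := by
      rw [expand_aeval]
      induction p using Polynomial.induction_on generalizing k with
      | C a => simp
      | add p q hp hq => simp [hp, hq]
      | monomial m a h =>
        rw [pow_succ, ← mul_assoc, map_mul, map_mul (aeval (ψ ^ n)), aeval_X, aeval_X,
          End.mul_apply, h, hj, End.mul_apply]
    exact congrArg (AEval'.of ψ) key

theorem GeneratedModTorsionBy.aeval_range_pow (T : End R V) {n : ℕ}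
    (hW : ∀ x ∈ (T ^ n).range, T x ∈ (T ^ n).range) (q : R[X]) (k : ℕ) :
    GeneratedModTorsionBy R[X] (AEval' T) (X ^ n * q) k ↔
      GeneratedModTorsionBy R[X] (AEval' (T.restrict hW)) q k := by
  let f : AEval' T →ₗ[R[X]] AEval' (T.restrict hW) :=
    LinearMap.ofAEval T ((AEval'.of (T.restrict hW)).toLinearMap ∘ₗ (T ^ n).rangeRestrict)
      fun x => by
        rw [LinearMap.comp_apply, LinearMap.comp_apply, LinearEquiv.coe_coe, AEval'.X_smul_of]
        exact congrArg _ (Subtype.ext (LinearMap.congr_fun (Commute.self_pow T n).symm.eq x))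
  have f_of (x : V) : f (AEval'.of T x) = AEval'.of (T.restrict hW) ((T ^ n).rangeRestrict x) := rfl
  refine congr_of_surjective (f := f) ?_ ?_ q k
  · exact (AEval'.of (T.restrict hW)).surjective.comp
      ((T ^ n).surjective_rangeRestrict.comp (AEval'.of T).symm.surjective)
  · ext x
    obtain ⟨x, rfl⟩ := (AEval'.of T).surjective x
    rw [LinearMap.mem_ker, f_of, mem_torsionBy_iff, AEval'.X_pow_smul_of]
    simp [← Subtype.val_inj]

theorem bijective_restrict_range_pow [IsNoetherian R V] {T : End R V} {n : ℕ}
    (hn : (T ^ (n + 1)).range = (T ^ n).range)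
    (hW : ∀ x ∈ (T ^ n).range, T x ∈ (T ^ n).range) : Function.Bijective (T.restrict hW) := by
  have hsurj : Function.Surjective (T.restrict hW) := by
    rintro ⟨x, hx⟩
    rw [← hn] at hx
    obtain ⟨y, rfl⟩ := hx
    exact ⟨⟨(T ^ n) y, y, rfl⟩, Subtype.ext (LinearMap.congr_fun (pow_succ' T n).symm y)⟩
  exact ⟨IsNoetherian.injective_of_surjective_endomorphism _ hsurj, hsurj⟩

theorem mapsTo_range_of_commute {c d : End R V} (h : Commute c d) :
    ∀ x ∈ d.range, c x ∈ d.range := by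
  rintro _ ⟨x, rfl⟩
  exact ⟨c x, (LinearMap.congr_fun h.eq x).symm⟩

theorem mapsTo_ker_of_commute {c d : End R V} (h : Commute c d) : ∀ x ∈ d.ker, c x ∈ d.ker := by
  intro x hx
  rw [LinearMap.mem_ker, ← End.mul_apply, ← h.eq, End.mul_apply, LinearMap.mem_ker.mp hx, map_zero]

end SquareZero

section SquareZeroField

open Module

variable {F V : Type*} [Field F] [AddCommGroup V] [Module F V] [Module.Finite F V] {a b : End F V}

theorem exists_chain_aeval_equiv (T : End F V) :
    ∃ l : List F[X], (∀ s ∈ l, s.Monic) ∧ (l.Pairwise fun s t => t ∣ s) ∧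
      Nonempty (AEval' T ≃ₗ[F[X]] CyclicProd l.get) := by
  classical
  let := UniqueFactorizationMonoid.toNormalizedGCDMonoid F[X]
  obtain ⟨l, hl, hchain, he⟩ :=
    exists_invariant_factors (AEval.isTorsion_of_finiteDimensional F V T)
  exact ⟨l, fun s hs => (normalize_eq_self_iff_monic (hl s hs).1).mp (hl s hs).2, hchain, he⟩

theorem exists_expand_equiv_of_bijective (ha : a * a = 0) (hb : b * b = 0)
    (hT : Function.Bijective (a + b)) :
    ∃ l : List F[X], (l.Pairwise fun s t => t ∣ s) ∧
      Nonempty (AEval' (a + b) ≃ₗ[F[X]] CyclicProd fun i => expand F 2 (l.get i)) := by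
  have hker := mapsTo_ker_of_commute (commute_add_sq_of_mul_self_eq_zero ha hb).symm
  let S := ((a + b) ^ 2).restrict hker
  obtain ⟨l, -, hchain, ⟨e⟩⟩ := exists_chain_aeval_equiv S
  refine ⟨l, hchain, ?_⟩
  have hbij := ((AEval'.of (a + b)).bijective.comp
    (bijective_add_apply_of_mul_self_eq_zero ha hb hT)).comp
      ((AEval'.of S).symm.bijective.prodMap (AEval'.of S).symm.bijective)
  refine ((CyclicProd.isCyclicDecomposition e.symm).map_of_bijective (x := X)
    (f := (expand F 2 : F[X] →+* F[X])) (expand_two_add_X_mul_bijective F)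
    (g := aevalExpandMap 2 S (a + b) a.ker.subtype fun _ => rfl) ?_).nonempty_equiv
  convert hbij using 2 with p
  exact congrArg (_ + ·) (AEval'.X_smul_of (a + b) _)

theorem exists_generatedModTorsionBy_iff_expand (ha : a * a = 0) (hb : b * b = 0) :
    ∃ (n : ℕ) (l : List F[X]), (l.Pairwise fun s t => t ∣ s) ∧ ∀ q k,
      GeneratedModTorsionBy F[X] (AEval' (a + b)) (X ^ n * q) k ↔
        GeneratedModTorsionBy F[X] (CyclicProd fun i => expand F 2 (l.get i)) q k := by
  obtain ⟨m, hm⟩ := Filter.eventually_atTop.mp (a + b).eventually_iInf_range_pow_eq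
  have hstab : ((a + b) ^ (2 * m + 1)).range = ((a + b) ^ (2 * m)).range :=
    (hm _ (by omega)).symm.trans (hm _ (by omega))
  have commute_pow {c : End F V} (hc : Commute c ((a + b) ^ 2)) :
      Commute c ((a + b) ^ (2 * m)) := by
    rw [pow_mul]
    exact hc.pow_right m
  have hWa := mapsTo_range_of_commute (commute_pow (commute_add_sq_of_mul_self_eq_zero ha hb))
  have hWb := mapsTo_range_of_commute (commute_pow (c := b) (by
    rw [add_comm]
    exact commute_add_sq_of_mul_self_eq_zero hb ha))
  have hWT := mapsTo_range_of_commute (Commute.self_pow (a + b) (2 * m))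
  obtain ⟨l, hchain, ⟨e⟩⟩ := exists_expand_equiv_of_bijective (a := a.restrict hWa)
    (b := b.restrict hWb) (LinearMap.ext fun x => Subtype.ext (LinearMap.congr_fun ha x))
    (LinearMap.ext fun x => Subtype.ext (LinearMap.congr_fun hb x))
    (bijective_restrict_range_pow hstab hWT)
  exact ⟨2 * m, l, hchain, fun q k =>
    (GeneratedModTorsionBy.aeval_range_pow (a + b) hWT q k).trans
      (GeneratedModTorsionBy.congr e q k)⟩

end SquareZeroField

section CompanionBasis

open Module Matrix

variable {F : Type*} [Field F] {p : F[X]}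

/-- The basis `1, X, X², …` of `F[X] ⧸ (p)`. -/
noncomputable def companionBasis (hp : p.Monic) :
    Basis (Fin p.natDegree) F (F[X] ⧸ Ideal.span {p}) :=
  AdjoinRoot.powerBasisAux' hp

theorem leftMulMatrix_powerBasis'_root (hp : p.Monic) :
    Algebra.leftMulMatrix (AdjoinRoot.powerBasis' hp).basis (AdjoinRoot.root p) =
      companion p.natDegree p := by
  have hmin : (AdjoinRoot.powerBasis' hp).minpolyGen = p := by
    rw [PowerBasis.minpolyGen_eq, AdjoinRoot.powerBasis'_gen, AdjoinRoot.minpoly_root hp.ne_zero,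
      hp.leadingCoeff, inv_one, C_1, mul_one]
  rw [← AdjoinRoot.powerBasis'_gen hp, PowerBasis.leftMulMatrix, hmin]
  ext i j
  have hj : (j : ℕ) + 1 = p.natDegree ↔ (j : ℕ) = p.natDegree - 1 := by
    have := (AdjoinRoot.powerBasis'_dim hp).subst j.2
    omega
  simp only [of_apply, companion, AdjoinRoot.powerBasis'_dim, hj]

theorem toMatrix_companionBasis_lsmul_X (hp : p.Monic) :
    LinearMap.toMatrix (companionBasis hp) (companionBasis hp)
      (Algebra.lsmul F F (F[X] ⧸ Ideal.span {p}) (X : F[X])) = companion p.natDegree p :=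
  leftMulMatrix_powerBasis'_root hp

end CompanionBasis

section MatrixOfEnd

open Module Matrix

theorem toMatrix_pi_basis_piMap {R ι : Type*} {κ V : ι → Type*} [CommSemiring R] [Fintype ι]
    [DecidableEq ι] [∀ i, Fintype (κ i)] [∀ i, DecidableEq (κ i)] [∀ i, AddCommMonoid (V i)]
    [∀ i, Module R (V i)] (b : ∀ i, Basis (κ i) R (V i)) (f : ∀ i, V i →ₗ[R] V i) :
    LinearMap.toMatrix (Pi.basis b) (Pi.basis b) (LinearMap.piMap f) =
      blockDiagonal' fun i => LinearMap.toMatrix (b i) (b i) (f i) := by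
  ext ⟨i, k⟩ ⟨j, k'⟩
  rw [LinearMap.toMatrix_apply, Pi.basis_repr, Pi.basis_apply]
  obtain rfl | hij := eq_or_ne i j
  · simp [LinearMap.toMatrix_apply, blockDiagonal'_apply_eq]
  · simp [hij, blockDiagonal'_apply_ne]

variable {R V m κ : Type*} [CommRing R] [AddCommGroup V] [Module R V] [Fintype m]
  [DecidableEq m] [Fintype κ] [DecidableEq κ] (b : Basis κ R V) (f : End R V)

theorem toMatrix_basis_reindex (e : m ≃ κ) :
    LinearMap.toMatrix (b.reindex e.symm) (b.reindex e.symm) f =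
      reindex e.symm e.symm (LinearMap.toMatrix b b f) := by
  ext i j
  simp [LinearMap.toMatrix_apply]

theorem exists_eq_conj_toMatrix_iff [Nontrivial R] {A : Matrix m m R} :
    (∃ (e : m ≃ κ) (P : (Matrix m m R)ˣ), A = (P : Matrix m m R) *
      reindex e.symm e.symm (LinearMap.toMatrix b b f) * (↑P⁻¹ : Matrix m m R)) ↔
      ∃ ψ : (m → R) ≃ₗ[R] V, ∀ z, ψ (A *ᵥ z) = f (ψ z) := by
  constructor
  · rintro ⟨e, P, rfl⟩
    let c := b.reindex e.symm
    let ψ := toLin'OfInv P.mul_inv P.inv_mul ≪≫ₗ c.equivFun.symm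
    have coord_ψ (z) : c.equivFun (ψ z) = (↑P⁻¹ : Matrix m m R) *ᵥ z :=
      c.equivFun.apply_symm_apply _
    have coord_f (v) : c.equivFun (f v) = LinearMap.toMatrix c c f *ᵥ c.equivFun v :=
      (LinearMap.toMatrix_mulVec_repr c c f v).symm
    refine ⟨ψ, fun z => c.equivFun.injective ?_⟩
    rw [coord_ψ, coord_f, coord_ψ, toMatrix_basis_reindex, mulVec_mulVec, mulVec_mulVec,
      ← mul_assoc, ← mul_assoc, P.inv_mul, one_mul]
  · rintro ⟨ψ, hψ⟩
    let std := Pi.basisFun R m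
    let e := std.indexEquiv (b.map ψ.symm)
    let d := (b.map ψ.symm).reindex e.symm
    let P : (Matrix m m R)ˣ := ⟨std.toMatrix d, d.toMatrix std,
      std.toMatrix_mul_toMatrix_flip d, d.toMatrix_mul_toMatrix_flip std⟩
    have toMatrix_d :
        LinearMap.toMatrix d d (toLin' A) = reindex e.symm e.symm (LinearMap.toMatrix b b f) := by
      ext i j
      simp [LinearMap.toMatrix_apply, d, hψ]
    refine ⟨e, P, ?_⟩
    calc A = LinearMap.toMatrix std std (toLin' A) := (LinearMap.toMatrix'_toLin' A).symm
      _ = std.toMatrix d * LinearMap.toMatrix d d (toLin' A) * d.toMatrix std :=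
        (basis_toMatrix_mul_linearMap_toMatrix_mul_basis_toMatrix std d std d _).symm
      _ = _ := by rw [toMatrix_d]; rfl

end MatrixOfEnd

section InvariantFactors

open Module Matrix

variable {F m : Type*} [Field F] [Fintype m] [DecidableEq m]

theorem exists_eq_conj_blockDiagonal_companion_iff {ι : Type*} [Finite ι] [DecidableEq ι]
    {s : ι → F[X]} (hs : ∀ i, (s i).Monic) {A : Matrix m m F} :
    (∃ (e : m ≃ Σ i, Fin (s i).natDegree) (P : (Matrix m m F)ˣ), A = (P : Matrix m m F) *
      reindex e.symm e.symm (blockDiagonal' fun i => companion (s i).natDegree (s i)) *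
        (↑P⁻¹ : Matrix m m F)) ↔ Nonempty (AEval' (toLin' A) ≃ₗ[F[X]] CyclicProd s) := by
  cases nonempty_fintype ι
  simp_rw [← fun i => toMatrix_companionBasis_lsmul_X (hs i), ← toMatrix_pi_basis_piMap,
    exists_eq_conj_toMatrix_iff]
  constructor
  · rintro ⟨ψ, hψ⟩
    exact ⟨.ofAEval _ ψ hψ⟩
  · rintro ⟨e⟩
    refine ⟨AEval'.of _ ≪≫ₗ e.restrictScalars F, fun z => ?_⟩
    exact (congrArg e (AEval'.X_smul_of _ _).symm).trans (map_smul e _ _)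

theorem isInvFactors_iff {A : Matrix m m F} {l : List F[X]} :
    IsInvFactors A l ↔ (∀ p ∈ l, p.Monic) ∧ (l.Pairwise fun s t => t ∣ s) ∧
      Nonempty (AEval' (toLin' A) ≃ₗ[F[X]] CyclicProd l.get) := by
  have : Trans (fun s t : F[X] => t ∣ s) (fun s t => t ∣ s) (fun s t => t ∣ s) :=
    ⟨fun hst htu => htu.trans hst⟩
  refine and_congr_right fun hl => and_congr List.isChain_iff_pairwise ?_
  exact exists_eq_conj_blockDiagonal_companion_iff fun i => hl _ (l.get_mem i)

end InvariantFactors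

section EvenOrOdd

/-- A polynomial all of whose monomials have even degree, or all of whose monomials have odd
degree. -/
def IsEvenOrOdd {R : Type*} [CommSemiring R] (p : R[X]) : Prop :=
  (∃ q : R[X], p = q.comp (X ^ 2)) ∨ ∃ q : R[X], p = X * q.comp (X ^ 2)

theorem isEvenOrOdd_X_pow_mul_expand {R : Type*} [CommSemiring R] (j : ℕ) (q : R[X]) :
    IsEvenOrOdd (X ^ j * expand R 2 q) := by
  rw [expand_eq_comp_X_pow]
  obtain ⟨i, rfl | rfl⟩ := j.even_or_odd'
  · refine .inl ⟨X ^ i * q, ?_⟩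
    rw [mul_comp, X_pow_comp, pow_mul]
  · refine .inr ⟨X ^ i * q, ?_⟩
    rw [mul_comp, X_pow_comp, pow_succ', pow_mul, mul_assoc]

theorem IsEvenOrOdd.coeff_eq_zero {R : Type*} [CommSemiring R] {p : R[X]} (hp : IsEvenOrOdd p)
    {i : ℕ} (hi : Odd (i + p.natDegree)) : p.coeff i = 0 := by
  nontriviality R
  obtain ⟨q, rfl⟩ | ⟨q, rfl⟩ := hp <;> rw [← expand_eq_comp_X_pow] at hi ⊢
  · rw [natDegree_expand] at hi
    rw [coeff_expand two_pos, if_neg (by grind)]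
  · obtain rfl | hq := eq_or_ne q 0
    · simp
    rw [natDegree_X_mul ((expand_ne_zero two_pos).mpr hq), natDegree_expand] at hi
    rcases i with _ | i
    · simp
    · rw [coeff_X_mul, coeff_expand two_pos, if_neg (by grind)]

theorem exists_associated_pow_mul_of_dvd_pow_mul_iff {α : Type*} [CommMonoidWithZero α]
    [IsCancelMulZero α] {p s t : α} (hp : Prime p) {n : ℕ} (h : ∀ q, s ∣ p ^ n * q ↔ t ∣ q) :
    ∃ j, Associated (p ^ j * t) s := by
  obtain ⟨c, rfl⟩ := (h s).mp (dvd_mul_left s _)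
  obtain rfl | ht := eq_or_ne t 0
  · exact ⟨0, by simp⟩
  have hc : c ∣ p ^ n := by
    rw [← mul_dvd_mul_iff_left ht, mul_comm t (p ^ n), h]
  obtain ⟨j, -, hj⟩ := (dvd_prime_pow hp n).mp hc
  exact ⟨j, by simpa only [mul_comm] using hj.symm.mul_left t⟩

theorem isEvenOrOdd_of_dvd_X_pow_mul_iff {F : Type*} [Field F] {s t : F[X]} {n : ℕ}
    (h : ∀ q, s ∣ X ^ n * q ↔ expand F 2 t ∣ q) : IsEvenOrOdd s := by
  obtain ⟨j, u, rfl⟩ := exists_associated_pow_mul_of_dvd_pow_mul_iff prime_X h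
  obtain ⟨c, -, hc⟩ := isUnit_iff.mp u.isUnit
  rw [← hc, mul_assoc, ← expand_C 2 c, ← map_mul]
  exact isEvenOrOdd_X_pow_mul_expand j (t * C c)

end EvenOrOdd

theorem isEvenOrOdd_of_cyclicProd_equiv {F V : Type*} [Field F] [AddCommGroup V] [Module F V]
    [Module.Finite F V] {a b : Module.End F V} (ha : a * a = 0) (hb : b * b = 0) {l : List F[X]}
    (hl : l.Pairwise fun s t => t ∣ s) (e : Module.AEval' (a + b) ≃ₗ[F[X]] CyclicProd l.get) :
    ∀ s ∈ l, IsEvenOrOdd s := by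
  have : Std.Refl fun s t : F[X] => t ∣ s := ⟨dvd_refl⟩
  obtain ⟨n, l', hl', hgen⟩ := exists_generatedModTorsionBy_iff_expand ha hb
  rw [List.forall_mem_iff_get]
  intro i
  have dvd_iff (q : F[X]) : l.get i ∣ X ^ n * q ↔
      GeneratedModTorsionBy F[X] (CyclicProd fun i => expand F 2 (l'.get i)) q i := by
    rw [← hgen, GeneratedModTorsionBy.congr e,
      GeneratedModTorsionBy.cyclicProd_iff_dvd fun _ _ => hl.rel_get_of_le]
  rcases lt_or_ge (i : ℕ) l'.length with hi | hi
  · refine isEvenOrOdd_of_dvd_X_pow_mul_iff (t := l'.get ⟨i, hi⟩) fun q => (dvd_iff q).trans ?_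
    exact GeneratedModTorsionBy.cyclicProd_iff_dvd
      (fun _ _ hij => map_dvd (expand F 2) (hl'.rel_get_of_le hij)) ⟨i, hi⟩ q
  · refine isEvenOrOdd_of_dvd_X_pow_mul_iff (t := 1) fun q => (dvd_iff q).trans ?_
    rw [map_one]
    exact iff_of_true (.cyclicProd_of_dvd fun j hj => by omega) (one_dvd q)

section Grading

open Matrix

variable {m : Type*} [Fintype m]

theorem exists_sq_eq_zero_add_of_grading {R : Type*} [Semiring R] [DecidableEq m]
    (A : Matrix m m R) (ε : m → Bool) (h : ∀ i j, A i j ≠ 0 → ε i ≠ ε j) :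
    ∃ B C : Matrix m m R, B ^ 2 = 0 ∧ C ^ 2 = 0 ∧ A = B + C := by
  have sq_eq_zero (t : Bool) : (of fun i j => if ε j = t then A i j else 0) ^ 2 = 0 := by
    ext i j
    rw [sq, mul_apply]
    refine Finset.sum_eq_zero fun k _ => ?_
    rw [of_apply, of_apply]
    by_cases hkj : A k j = 0
    · simp [hkj]
    · have := h k j hkj
      by_cases hj : ε j = t
      · rw [if_neg fun hk => this (hk.trans hj.symm), zero_mul]
      · rw [if_neg hj, mul_zero]
  refine ⟨_, _, sq_eq_zero true, sq_eq_zero false, ?_⟩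
  ext i j
  cases hj : ε j <;> simp [hj]

theorem IsEvenOrOdd.odd_add_of_companion_ne_zero {F : Type*} [Field F] {p : F[X]}
    (hp : IsEvenOrOdd p) {i j : Fin p.natDegree} (h : companion p.natDegree p i j ≠ 0) :
    Odd ((i : ℕ) + j) := by
  unfold companion at h
  split_ifs at h with hj hij
  · by_contra hodd
    exact h (by rw [hp.coeff_eq_zero (by grind), neg_zero])
  · exact ⟨j, by omega⟩
  · exact absurd rfl h

theorem IsInvFactors.exists_sq_eq_zero_add {F : Type*} [Field F] [DecidableEq m]
    {A : Matrix m m F} {l : List F[X]} (h : IsInvFactors A l) (hl : ∀ p ∈ l, IsEvenOrOdd p) :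
    ∃ B C : Matrix m m F, B ^ 2 = 0 ∧ C ^ 2 = 0 ∧ A = B + C := by
  obtain ⟨-, -, e, P, rfl⟩ := h
  obtain ⟨B, C, hB, hC, hBC⟩ := exists_sq_eq_zero_add_of_grading
    (blockDiagonal' fun i => companion (l.get i).natDegree (l.get i))
    (fun x => decide (Even (x.2 : ℕ))) (by
      rintro ⟨i, k⟩ ⟨j, k'⟩ hne
      obtain rfl : i = j := by
        by_contra hij
        exact hne (blockDiagonal'_apply_ne _ _ _ hij)
      rw [blockDiagonal'_apply_eq] at hne
      have := (hl _ (l.get_mem i)).odd_add_of_companion_ne_zero hne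
      grind)
  let ρ := reindexAlgEquiv F F e.symm
  refine ⟨P.val * ρ B * P⁻¹.val, P.val * ρ C * P⁻¹.val, ?_, ?_, ?_⟩
  · rw [Units.conj_pow, ← map_pow, hB, map_zero, mul_zero, zero_mul]
  · rw [Units.conj_pow, ← map_pow, hC, map_zero, mul_zero, zero_mul]
  · rw [← add_mul, ← mul_add, ← map_add, ← hBC]
    rfl

end Grading

theorem sum_two_square_zero_iff_invFactors_even_or_odd_general {F m : Type*} [Field F] [Fintype m]
    [DecidableEq m] (M : Matrix m m F) :
    (∃ A B : Matrix m m F, A ^ 2 = 0 ∧ B ^ 2 = 0 ∧ M = A + B) ↔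
      ∀ l : List F[X], IsInvFactors M l → ∀ p ∈ l, IsEvenOrOdd p := by
  constructor
  · rintro ⟨A, B, hA, hB, rfl⟩ l h
    obtain ⟨-, hl, ⟨e⟩⟩ := isInvFactors_iff.mp h
    rw [map_add] at e
    have toLin'_mul_self {C : Matrix m m F} (hC : C ^ 2 = 0) :
        (Matrix.toLin' C : Module.End F (m → F)) * Matrix.toLin' C = 0 := by
      rw [Module.End.mul_eq_comp, ← Matrix.toLin'_mul, ← sq, hC, map_zero]
    exact isEvenOrOdd_of_cyclicProd_equiv (toLin'_mul_self hA) (toLin'_mul_self hB) hl e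
  · intro h
    obtain ⟨l, hl⟩ := exists_chain_aeval_equiv (Matrix.toLin' M)
    have hM : IsInvFactors M l := isInvFactors_iff.mpr hl
    exact hM.exists_sq_eq_zero_add (h l hM)

/-- A matrix is the sum of two square-zero matrices if and only if each of its
invariant factors is an even polynomial (a polynomial in `t²`) or an odd
polynomial (of the form `t·q(t²)`). -/
theorem sum_two_square_zero_iff_invFactors_even_or_odd (F : Type*) [Field F]
    (n : ℕ) (M : Matrix (Fin n) (Fin n) F) :
    (∃ A B : Matrix (Fin n) (Fin n) F, A ^ 2 = 0 ∧ B ^ 2 = 0 ∧ M = A + B) ↔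
      (∀ l : List (Polynomial F), IsInvFactors M l →
        ∀ p ∈ l, (∃ q : Polynomial F, p = q.comp (X ^ 2)) ∨
          (∃ q : Polynomial F, p = X * q.comp (X ^ 2))) :=
  sum_two_square_zero_iff_invFactors_even_or_odd_general M
end

section
/- Over a field F of characteristic 2, a matrix A ∈ Mat_n(F) is the sum of two idempotent matrices if and only if for every eigenvalue λ of A in the algebraic closure of F with λ ∉ {0, 1}, all the Jordan cells of A attached to λ are even-sized. -/
open Polynomial

/-!
In characteristic 2, `A = P + (A - P)` is a sum of two idempotents iff `P` is an idempotent with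
`⁅P, A⁆ = A ^ 2 + A`, that is, iff the commutator with `P` acts on the polynomials in `A` as the
derivation `D = (X ^ 2 + X) d/dX`. Let `p` be coprime to `D p`. As `D (p ^ (2 * j)) = 0`, the
idempotent `P` commutes with `p(A) ^ (2 * j)`. Hence if `p(A)` kills `v = p(A) ^ (2 * j) x`, then
applying `P` to `p(A) v = 0` writes `(D p)(A) v`, and so `v` itself, as an element of the range of
`p(A) ^ (2 * j + 1)`: every cell for `p` is even. Conversely `D` is itself idempotent on `F[X]` and
satisfies `⁅D, X⁆ = X ^ 2 + X`, and it descends to the cyclic module `F[X] ⧸ (p ^ e)` as soon as `e`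
is even or `p` divides `D p`; the structure theorem for `F[X]`-modules concludes.
-/

open Function Module
open scoped DirectSum

section Idempotents

/-- The element `a` is the sum of two idempotents, written with squares as for matrices. -/
def IsSumOfTwoIdempotents {R : Type*} [Semiring R] (a : R) : Prop :=
  ∃ P Q : R, P ^ 2 = P ∧ Q ^ 2 = Q ∧ a = P + Q

theorem IsSumOfTwoIdempotents.map {R S : Type*} [Semiring R] [Semiring S] {a : R}
    (h : IsSumOfTwoIdempotents a) (f : R →+* S) : IsSumOfTwoIdempotents (f a) := by
  obtain ⟨P, Q, hP, hQ, rfl⟩ := h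
  exact ⟨f P, f Q, by rw [← map_pow, hP], by rw [← map_pow, hQ], map_add f P Q⟩

theorem isSumOfTwoIdempotents_equiv_iff {R S : Type*} [Semiring R] [Semiring S] {a : R}
    (e : R ≃+* S) : IsSumOfTwoIdempotents (e a) ↔ IsSumOfTwoIdempotents a :=
  ⟨fun h => by simpa using h.map (e.symm : S →+* R), fun h => h.map (e : R →+* S)⟩

theorem IsSumOfTwoIdempotents.lmap {R ι : Type*} {M : ι → Type*} [Semiring R]
    [∀ i, AddCommMonoid (M i)] [∀ i, Module R (M i)] {f : ∀ i, End R (M i)}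
    (h : ∀ i, IsSumOfTwoIdempotents (f i)) :
    IsSumOfTwoIdempotents (DirectSum.lmap f : End R (⨁ i, M i)) := by
  choose P Q hP hQ hf using h
  refine ⟨DirectSum.lmap P, DirectSum.lmap Q, ?_, ?_, ?_⟩
  · rw [pow_two, End.mul_eq_comp, ← DirectSum.lmap_comp]
    exact congrArg DirectSum.lmap (funext fun i => (pow_two (P i)).symm.trans (hP i))
  · rw [pow_two, End.mul_eq_comp, ← DirectSum.lmap_comp]
    exact congrArg DirectSum.lmap (funext fun i => (pow_two (Q i)).symm.trans (hQ i))
  · refine LinearMap.ext fun x => DFinsupp.ext fun i => ?_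
    exact LinearMap.congr_fun (hf i) (x i)

theorem two_eq_zero_of_algebra_charTwo (R : Type*) {A : Type*} [CommSemiring R] [CharP R 2]
    [Semiring A] [Algebra R A] : (2 : A) = 0 := by
  rw [← map_ofNat (algebraMap R A) 2, CharTwo.two_eq_zero, map_zero]

theorem isSumOfTwoIdempotents_iff_exists_lie_eq {R : Type*} [Ring R] (h2 : (2 : R) = 0) {a : R} :
    IsSumOfTwoIdempotents a ↔ ∃ P : R, P ^ 2 = P ∧ ⁅P, a⁆ = a ^ 2 + a := by
  constructor
  · rintro ⟨P, Q, hP, hQ, rfl⟩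
    refine ⟨P, hP, ?_⟩
    rw [Ring.lie_def]
    linear_combination (norm := noncomm_ring) -hP - hQ - h2 * (P + Q + Q * P)
  · rintro ⟨P, hP, h⟩
    rw [Ring.lie_def] at h
    refine ⟨P, a - P, hP, ?_, (add_sub_cancel P a).symm⟩
    linear_combination (norm := noncomm_ring) hP - h - h2 * (a * P + a - P)

end Idempotents

section EvenCells

/-- All generalized Jordan cells of `a` on `M` have even size. When `a` is a prime of a principal
ideal domain, this says that the cyclic summands `R ⧸ (a ^ e)` of `M` have `e` even; when `a` is
an endomorphism of a vector space `M`, that its Jordan cells for the eigenvalue `0` are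
even-sized. -/
def HasOnlyEvenCells {R : Type*} [Semiring R] (a : R) (M : Type*) [AddCommMonoid M]
    [Module R M] : Prop :=
  ∀ (j : ℕ) (x : M), a ^ (2 * j + 1) • x = 0 → ∃ y : M, a ^ (2 * j + 1) • y = a ^ (2 * j) • x

theorem HasOnlyEvenCells.of_retract {R S M N : Type*} [Semiring R] [Semiring S] [AddCommMonoid M]
    [AddCommMonoid N] [Module R M] [Module S N] {a : R} {b : S} (h : HasOnlyEvenCells b N)
    (i : M →+ N) (r : N → M) (hri : LeftInverse r i) (hi : Semiconj i (a • ·) (b • ·))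
    (hr : Semiconj r (b • ·) (a • ·)) : HasOnlyEvenCells a M := by
  have hi_pow (k : ℕ) (x : M) : i (a ^ k • x) = b ^ k • i x := by
    simpa only [smul_iterate] using hi.iterate_right k x
  have hr_pow (k : ℕ) (y : N) : r (b ^ k • y) = a ^ k • r y := by
    simpa only [smul_iterate] using hr.iterate_right k y
  intro j x hx
  obtain ⟨y, hy⟩ := h j (i x) (by rw [← hi_pow, hx, map_zero])
  exact ⟨r y, by rw [← hr_pow, hy, ← hi_pow, hri]⟩

variable {R M : Type*} [CommRing R] [AddCommGroup M] [Module R M]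

theorem hasOnlyEvenCells_of_isCoprime {a b : R} (hab : IsCoprime a b)
    (hb : ∀ x : M, b • x = 0) : HasOnlyEvenCells a M := by
  intro j x hx
  obtain ⟨c, d, hcd⟩ := hab.pow_left (m := 2 * j + 1)
  have hx0 : x = 0 := by
    rw [← one_smul R x, ← hcd, add_smul, mul_smul, mul_smul, hx, hb, smul_zero, smul_zero, add_zero]
  exact ⟨0, by rw [hx0, smul_zero, smul_zero]⟩

theorem exists_mul_smul_eq_of_isCoprime {a b : R} (hab : IsCoprime a b) {x y z : M}
    (hy : a • y = x) (hz : b • z = x) : ∃ u : M, (a * b) • u = x := by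
  obtain ⟨c, d, hcd⟩ := hab
  refine ⟨c • z + d • y, ?_⟩
  calc (a * b) • (c • z + d • y) = (c * a) • b • z + (d * b) • a • y := by module
    _ = x := by rw [hy, hz, ← add_smul, hcd, one_smul]

theorem HasOnlyEvenCells.mul {a b : R} (ha : HasOnlyEvenCells a M) (hb : HasOnlyEvenCells b M)
    (hab : IsCoprime a b) : HasOnlyEvenCells (a * b) M := by
  intro j x hx
  obtain ⟨c, d, hcd⟩ := hab
  obtain ⟨y, hy⟩ := ha j (b ^ (2 * j + 1) • x) (by rw [smul_smul, ← mul_pow, hx])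
  obtain ⟨z, hz⟩ := hb j (a ^ (2 * j + 1) • x) (by rw [smul_smul, ← mul_pow, mul_comm b, hx])
  have split : (a * b) ^ (2 * j) • x =
      c • b ^ (2 * j) • a ^ (2 * j + 1) • x + d • a ^ (2 * j) • b ^ (2 * j + 1) • x := by
    linear_combination (norm := module) -(hcd • ((a * b) ^ (2 * j) • x))
  rw [mul_pow a b (2 * j + 1)]
  apply exists_mul_smul_eq_of_isCoprime (IsCoprime.pow ⟨c, d, hcd⟩)
    (y := c • b ^ (2 * j) • x + d • y) (z := c • z + d • a ^ (2 * j) • x)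
  · rw [split, ← hy]
    module
  · rw [split, ← hz]
    module

theorem HasOnlyEvenCells.prod {ι : Type*} {s : Finset ι} {a : ι → R}
    (h : ∀ i ∈ s, HasOnlyEvenCells (a i) M)
    (hs : (s : Set ι).Pairwise (IsCoprime on a)) : HasOnlyEvenCells (∏ i ∈ s, a i) M := by
  classical
  induction s using Finset.induction_on with
  | empty => exact hasOnlyEvenCells_of_isCoprime isCoprime_one_left (zero_smul R)
  | insert i s hi ih =>
    rw [Finset.forall_mem_insert] at h
    rw [Finset.coe_insert, Set.pairwise_insert_of_symm] at hs
    rw [Finset.prod_insert hi]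
    refine h.1.mul (ih h.2 hs.1) (IsCoprime.prod_right fun k hk => hs.2 k hk ?_)
    exact fun hik => hi (hik ▸ hk)

theorem hasOnlyEvenCells_of_splits {K M : Type*} [Field K] [AddCommGroup M] [Module K[X] M]
    {p : K[X]} (hp : p.Splits) (hsep : p.Separable)
    (h : ∀ lam, p.IsRoot lam → HasOnlyEvenCells (X - C lam) M) : HasOnlyEvenCells p M := by
  let s : Finset K := ⟨p.roots, nodup_roots hsep⟩
  have hs : p = C p.leadingCoeff * ∏ lam ∈ s, (X - C lam) := hp.eq_prod_roots
  have hunit : IsUnit (C p.leadingCoeff) :=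
    isUnit_C.2 (isUnit_iff_ne_zero.2 (leadingCoeff_ne_zero.2 hsep.ne_zero))
  rw [hs]
  refine HasOnlyEvenCells.mul ?_ (.prod (fun lam hlam => h lam (isRoot_of_mem_roots hlam)) ?_)
    (isCoprime_one_left.of_isCoprime_of_dvd_left hunit.dvd)
  · exact hasOnlyEvenCells_of_isCoprime (isCoprime_zero_right.2 hunit) (zero_smul _)
  · exact (pairwise_coprime_X_sub_C injective_id).set_pairwise _

theorem HasOnlyEvenCells.even_of_quotient [IsDomain R] {p : R} (hp0 : p ≠ 0) (hp : ¬IsUnit p)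
    {e : ℕ} (h : HasOnlyEvenCells p (R ⧸ Submodule.span R {p ^ e})) : Even e := by
  by_contra he
  obtain ⟨j, rfl⟩ := Nat.not_even_iff_odd.1 he
  have hzero (x : R ⧸ Submodule.span R {p ^ (2 * j + 1)}) : p ^ (2 * j + 1) • x = 0 := by
    obtain ⟨g, rfl⟩ := Submodule.Quotient.mk_surjective _ x
    rw [← Submodule.Quotient.mk_smul, Submodule.Quotient.mk_eq_zero]
    exact Submodule.mem_span_singleton.2 ⟨g, mul_comm _ _⟩
  obtain ⟨y, hy⟩ := h j (Submodule.Quotient.mk 1) (hzero _)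
  rw [hzero, eq_comm, ← Submodule.Quotient.mk_smul, Submodule.Quotient.mk_eq_zero, smul_eq_mul,
    mul_one] at hy
  have hdvd : p ^ (2 * j + 1) ∣ p ^ (2 * j) := Ideal.mem_span_singleton.1 hy
  exact Nat.not_succ_le_self _ ((pow_dvd_pow_iff hp0 hp).1 hdvd)

end EvenCells

section Rank

variable {K V : Type*} [Field K] [AddCommGroup V] [Module K V]

theorem range_pow_inf_ker_le_iff (N : End K V) (m : ℕ) :
    LinearMap.range (N ^ m) ⊓ LinearMap.ker N ≤ LinearMap.range (N ^ (m + 1)) ↔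
      ∀ x, (N ^ (m + 1)) x = 0 → ∃ y, (N ^ (m + 1)) y = (N ^ m) x := by
  simp only [pow_succ' N m, End.mul_apply, SetLike.le_def, Submodule.mem_inf, LinearMap.mem_ker,
    LinearMap.mem_range, and_imp, forall_exists_index, forall_apply_eq_imp_iff]

variable [FiniteDimensional K V]

theorem finrank_range_pow (N : End K V) (m : ℕ) :
    finrank K (LinearMap.range (N ^ m)) = finrank K (LinearMap.range (N ^ (m + 1))) +
      finrank K ↥(LinearMap.range (N ^ m) ⊓ LinearMap.ker N) := by
  have h := (N.domRestrict (LinearMap.range (N ^ m))).finrank_range_add_finrank_ker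
  rw [LinearMap.range_domRestrict, LinearMap.ker_domRestrict] at h
  rw [← h, pow_succ', End.mul_eq_comp, LinearMap.range_comp,
    ← Submodule.finrank_map_subtype_eq, Submodule.map_comap_subtype]

theorem finrank_range_pow_add_eq_two_mul_iff (N : End K V) (m : ℕ) :
    finrank K (LinearMap.range (N ^ m)) + finrank K (LinearMap.range (N ^ (m + 2))) =
        2 * finrank K (LinearMap.range (N ^ (m + 1))) ↔
      LinearMap.range (N ^ m) ⊓ LinearMap.ker N ≤ LinearMap.range (N ^ (m + 1)) := by
  have hle : LinearMap.range (N ^ (m + 1)) ⊓ LinearMap.ker N ≤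
      LinearMap.range (N ^ m) ⊓ LinearMap.ker N :=
    inf_le_inf_right _ (pow_succ N m ▸ LinearMap.range_comp_le_range N (N ^ m))
  have hfinrank : finrank K (LinearMap.range (N ^ m)) + finrank K (LinearMap.range (N ^ (m + 2))) =
        2 * finrank K (LinearMap.range (N ^ (m + 1))) ↔
      finrank K ↥(LinearMap.range (N ^ (m + 1)) ⊓ LinearMap.ker N) =
        finrank K ↥(LinearMap.range (N ^ m) ⊓ LinearMap.ker N) := by
    have h₀ := finrank_range_pow N m
    have h₁ : _ = finrank K (LinearMap.range (N ^ (m + 2))) + _ := finrank_range_pow N (m + 1)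
    omega
  rw [hfinrank]
  constructor
  · intro h
    rw [← Submodule.eq_of_le_of_finrank_eq hle h]
    exact inf_le_left
  · intro h
    rw [le_antisymm hle (le_inf h inf_le_right)]

theorem hasOnlyEvenCells_end_iff_finrank_range (N : End K V) :
    HasOnlyEvenCells N V ↔ ∀ k : ℕ, Odd k →
      finrank K (LinearMap.range (N ^ (k - 1))) + finrank K (LinearMap.range (N ^ (k + 1))) =
        2 * finrank K (LinearMap.range (N ^ k)) := by
  have hcell (j : ℕ) := (range_pow_inf_ker_le_iff N (2 * j)).symm.trans
    (finrank_range_pow_add_eq_two_mul_iff N (2 * j)).symm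
  exact (forall_congr' hcell).trans
    ⟨fun h k ⟨j, hj⟩ => by subst hj; exact h j, fun h j => h (2 * j + 1) (odd_two_mul_add_one j)⟩

end Rank

section PolynomialModules

variable {R M : Type*} [CommRing R] [AddCommGroup M] [Module R M] [Module R[X] M]
  [IsScalarTower R R[X] M]

/-- The commutator with `P` is a derivation, so on polynomials it is determined by its value
at `X`. -/
theorem apply_smul_eq_smul_apply_add_derivative_smul {P : End R M} {q : R[X]}
    (hP : ⁅P, Algebra.lsmul R R M (X : R[X])⁆ = Algebra.lsmul R R M q) (p : R[X]) (x : M) :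
    P (p • x) = p • P x + (q * derivative p) • x := by
  have hX (x : M) : P ((X : R[X]) • x) = (X : R[X]) • P x + q • x :=
    sub_eq_iff_eq_add'.1 (LinearMap.congr_fun hP x)
  induction p using Polynomial.induction_on generalizing x with
  | C c =>
    rw [derivative_C, mul_zero, zero_smul, add_zero, ← algebraMap_eq, algebraMap_smul,
      algebraMap_smul, map_smul]
  | add p r hp hr =>
    simp only [add_smul, map_add, hp, hr, mul_add]
    abel
  | monomial n c ih =>
    rw [pow_succ, ← mul_assoc, mul_smul, ih, hX, derivative_mul (g := X), derivative_X]
    module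

theorem IsSumOfTwoIdempotents.hasOnlyEvenCells [CharP R 2]
    (h : IsSumOfTwoIdempotents (Algebra.lsmul R R M (X : R[X]))) {p : R[X]}
    (hp : IsCoprime p ((X ^ 2 + X) * derivative p)) : HasOnlyEvenCells p M := by
  obtain ⟨P, -, hP⟩ :=
    (isSumOfTwoIdempotents_iff_exists_lie_eq (two_eq_zero_of_algebra_charTwo R)).1 h
  rw [← map_pow, ← map_add] at hP
  obtain ⟨a, b, hab⟩ := hp
  intro j x hx
  have hPx : P (p ^ (2 * j) • x) = p ^ (2 * j) • P x := by
    rw [apply_smul_eq_smul_apply_add_derivative_smul hP, derivative_pow]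
    simp [CharTwo.two_eq_zero]
  have hpx : p • p ^ (2 * j) • x = 0 := by rw [smul_smul, ← pow_succ', hx]
  have hPpx : p • p ^ (2 * j) • P x + ((X ^ 2 + X) * derivative p) • p ^ (2 * j) • x = 0 := by
    rw [← hPx, ← apply_smul_eq_smul_apply_add_derivative_smul hP, hpx, map_zero]
  refine ⟨-b • P x, ?_⟩
  linear_combination (norm := module) hab • p ^ (2 * j) • x - a • hpx - b • hPpx

end PolynomialModules

section Quotient

variable {R : Type*} [CommRing R]

theorem derivative_derivative_of_charTwo [CharP R 2] (g : R[X]) :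
    derivative (derivative g) = 0 := by
  have h := congrFun (factorial_smul_hasseDeriv (R := R) 2) g
  rw [iterate_succ_apply, iterate_one] at h
  rw [← h, LinearMap.smul_apply, Nat.factorial_two, two_smul, CharTwo.add_self_eq_zero]

theorem pow_dvd_mul_derivative_pow {p q : R[X]} (h : p ∣ q * derivative p) (e : ℕ) :
    p ^ e ∣ q * derivative (p ^ e) := by
  cases e with
  | zero => simp
  | succ m =>
    obtain ⟨r, hr⟩ := h
    refine ⟨C ((m : R) + 1) * r, ?_⟩
    rw [derivative_pow_succ]
    linear_combination C ((m : R) + 1) * p ^ m * hr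

/-- The derivation `(X ^ 2 + X) d/dX` of `R[X]`. -/
noncomputable def idempotentDerivation (R : Type*) [CommRing R] : Derivation R R[X] R[X] :=
  (X ^ 2 + X : R[X]) • derivative'

theorem idempotentDerivation_apply (g : R[X]) :
    idempotentDerivation R g = (X ^ 2 + X) * derivative g := rfl

theorem idempotentDerivation_idempotentDerivation [CharP R 2] (g : R[X]) :
    idempotentDerivation R (idempotentDerivation R g) = idempotentDerivation R g := by
  simp only [idempotentDerivation_apply, derivative_mul, derivative_derivative_of_charTwo,
    derivative_add, derivative_X_pow, derivative_X]
  simp [CharTwo.two_eq_zero]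

theorem isSumOfTwoIdempotents_lsmul_X_quotient [CharP R 2] {f : R[X]}
    (hf : f ∣ (X ^ 2 + X) * derivative f) :
    IsSumOfTwoIdempotents
      (Algebra.lsmul R R (R[X] ⧸ Submodule.span R[X] {f}) (X : R[X])) := by
  let I := Submodule.span R[X] {f}
  let D := idempotentDerivation R
  have hI : I.restrictScalars R ≤ (I.restrictScalars R).comap D.toLinearMap := by
    intro g hg
    obtain ⟨a, rfl⟩ := Submodule.mem_span_singleton.1 hg
    suffices f ∣ D (a • f) from Ideal.mem_span_singleton.2 this
    rw [smul_eq_mul, D.leibniz]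
    exact dvd_add (hf.mul_left a) (Dvd.intro _ rfl)
  let P := Submodule.mapQ (I.restrictScalars R) (I.restrictScalars R) D.toLinearMap hI
  refine (isSumOfTwoIdempotents_iff_exists_lie_eq (two_eq_zero_of_algebra_charTwo R)).2
    ⟨P, LinearMap.ext fun m => ?_, LinearMap.ext fun m => ?_⟩
  · obtain ⟨g, rfl⟩ := Submodule.Quotient.mk_surjective _ m
    exact congrArg (Submodule.Quotient.mk (p := I)) (idempotentDerivation_idempotentDerivation g)
  · obtain ⟨g, rfl⟩ := Submodule.Quotient.mk_surjective _ m
    have hlie : D (X * g) - X * D g = X * (X * g) + X * g := by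
      simp only [D, idempotentDerivation_apply, derivative_mul, derivative_X]
      ring
    exact congrArg (Submodule.Quotient.mk (p := I)) hlie

end Quotient

section Sufficiency

theorem isSumOfTwoIdempotents_lsmul_X_of_hasOnlyEvenCells {F M : Type*} [Field F] [CharP F 2]
    [AddCommGroup M] [Module F M] [Module F[X] M] [IsScalarTower F F[X] M] [Module.Finite F[X] M]
    (htors : Module.IsTorsion F[X] M)
    (h : ∀ p : F[X], Irreducible p → IsCoprime p ((X ^ 2 + X) * derivative p) →
      HasOnlyEvenCells p M) :
    IsSumOfTwoIdempotents (Algebra.lsmul F F M (X : F[X])) := by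
  classical
  obtain ⟨ι, _, p, hp, e, ⟨f⟩⟩ := Module.equiv_directSum_of_isTorsion htors
  let Q (i : ι) := F[X] ⧸ Submodule.span F[X] {p i ^ e i}
  have hcyclic (i : ι) : IsSumOfTwoIdempotents (Algebra.lsmul F F (Q i) (X : F[X])) := by
    refine isSumOfTwoIdempotents_lsmul_X_quotient ?_
    by_cases hdvd : p i ∣ (X ^ 2 + X) * derivative (p i)
    · exact pow_dvd_mul_derivative_pow hdvd (e i)
    let inclusion : Q i →ₗ[F[X]] M := f.symm.toLinearMap ∘ₗ DirectSum.lof F[X] ι Q i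
    let projection : M →ₗ[F[X]] Q i := DirectSum.component F[X] ι Q i ∘ₗ f.toLinearMap
    have hproj : LeftInverse projection inclusion := fun x => by
      simp [inclusion, projection, DirectSum.component.lof_self]
    have hQ : HasOnlyEvenCells (p i) (Q i) :=
      (h (p i) (hp i) ((hp i).coprime_iff_not_dvd.2 hdvd)).of_retract inclusion.toAddMonoidHom
        projection hproj (inclusion.map_smul (p i)) (projection.map_smul (p i))
    have heven : Even (e i) := hQ.even_of_quotient (hp i).ne_zero (hp i).not_isUnit
    rw [derivative_pow, (CharP.cast_eq_zero_iff F 2 (e i)).2 heven.two_dvd]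
    simp
  rw [← isSumOfTwoIdempotents_equiv_iff (f.restrictScalars F).conjRingEquiv]
  have hf : (f.restrictScalars F).conjRingEquiv (Algebra.lsmul F F M (X : F[X])) =
      DirectSum.lmap fun i => Algebra.lsmul F F (Q i) (X : F[X]) := by
    refine LinearMap.ext fun y => DFinsupp.ext fun i => ?_
    have hy : f ((X : F[X]) • f.symm y) = (X : F[X]) • y := by
      rw [map_smul, f.apply_symm_apply]
    exact DFunLike.congr_fun hy i
  exact hf ▸ .lmap hcyclic

end Sufficiency

section Matrices

theorem isSumOfTwoIdempotents_lsmul_X_aeval'_iff {R V : Type*} [CommRing R] [AddCommGroup V]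
    [Module R V] (f : End R V) :
    IsSumOfTwoIdempotents (Algebra.lsmul R R (AEval' f) (X : R[X])) ↔ IsSumOfTwoIdempotents f := by
  rw [← isSumOfTwoIdempotents_equiv_iff (AEval'.of f).conjRingEquiv]
  have hf : (AEval'.of f).conjRingEquiv f = Algebra.lsmul R R (AEval' f) (X : R[X]) := by
    refine LinearMap.ext fun x => ?_
    have hx := AEval'.X_smul_of f ((AEval'.of f).symm x)
    rw [LinearEquiv.apply_symm_apply] at hx
    exact hx.symm
  rw [hf]

theorem hasOnlyEvenCells_aeval'_iff {R V : Type*} [CommRing R] [AddCommGroup V] [Module R V]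
    (f : End R V) (p : R[X]) :
    HasOnlyEvenCells p (AEval' f) ↔ HasOnlyEvenCells (aeval f p) V :=
  ⟨fun h => h.of_retract (AEval'.of f : V →+ AEval' f) (AEval'.of f).symm
      (AEval'.of f).symm_apply_apply (AEval.of_aeval_smul f p) (AEval.of_symm_smul f p),
    fun h => h.of_retract ((AEval'.of f).symm : AEval' f →+ V) (AEval'.of f)
      (AEval'.of f).apply_symm_apply (AEval.of_symm_smul f p) (AEval.of_aeval_smul f p)⟩

variable {ι : Type*} [Fintype ι] [DecidableEq ι]

theorem isSumOfTwoIdempotents_toLin'_iff {R : Type*} [CommRing R] (A : Matrix ι ι R) :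
    IsSumOfTwoIdempotents (Matrix.toLin' A) ↔ IsSumOfTwoIdempotents A :=
  isSumOfTwoIdempotents_equiv_iff (Matrix.toLinAlgEquiv' : Matrix ι ι R ≃ₐ[R] _).toRingEquiv

theorem aeval_toLin' {R : Type*} [CommRing R] (A : Matrix ι ι R) (p : R[X]) :
    aeval (Matrix.toLin' A) p = Matrix.toLin' (aeval A p) :=
  aeval_algHom_apply (Matrix.toLinAlgEquiv' : Matrix ι ι R ≃ₐ[R] _) A p

theorem hasOnlyEvenCells_X_sub_C_iff_rank {K : Type*} [Field K] (A : Matrix ι ι K) (lam : K) :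
    HasOnlyEvenCells (X - C lam) (AEval' (Matrix.toLin' A)) ↔
      ∀ k : ℕ, Odd k → ((A - lam • 1) ^ (k - 1)).rank + ((A - lam • 1) ^ (k + 1)).rank =
        2 * ((A - lam • 1) ^ k).rank := by
  have hrank (k : ℕ) : ((A - lam • 1) ^ k).rank =
      finrank K (LinearMap.range (Matrix.toLin' (A - lam • 1) ^ k)) := by
    rw [← Matrix.toLin'_pow]
    rfl
  have haeval : aeval A (X - C lam) = A - lam • 1 := by simp [Algebra.algebraMap_eq_smul_one]
  rw [hasOnlyEvenCells_aeval'_iff, aeval_toLin', haeval, hasOnlyEvenCells_end_iff_finrank_range]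
  simp only [hrank]

/-- Any `F`-linear retraction of `K` onto `F` descends solutions of linear systems over `F`. -/
theorem HasOnlyEvenCells.toLin'_of_map {F K : Type*} [Field F] [CommRing K] [Nontrivial K]
    [Algebra F K] {A : Matrix ι ι F}
    (h : HasOnlyEvenCells (Matrix.toLin' (A.map (algebraMap F K))) (ι → K)) :
    HasOnlyEvenCells (Matrix.toLin' A) (ι → F) := by
  obtain ⟨r, hr⟩ := (Algebra.linearMap F K).exists_leftInverse_of_injective
    (LinearMap.ker_eq_bot.2 (algebraMap F K).injective)
  refine h.of_retract ((algebraMap F K : F →+ K).compLeft ι) (r ∘ ·)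
    (fun v => funext fun i => LinearMap.congr_fun hr (v i))
    (fun v => funext fun i => RingHom.map_mulVec _ A v i) (fun w => funext fun i => ?_)
  simp [Matrix.mulVec, dotProduct, ← Algebra.smul_def]

theorem aeval_map_algebraMap_map {R S : Type*} [CommRing R] [CommRing S] [Algebra R S]
    (A : Matrix ι ι R) (p : R[X]) :
    aeval (A.map (algebraMap R S)) (p.map (algebraMap R S)) =
      (aeval A p).map (algebraMap R S) := by
  rw [aeval_map_algebraMap]
  exact aeval_algHom_apply (Algebra.ofId R S).mapMatrix A p

theorem HasOnlyEvenCells.aeval'_of_map {F K : Type*} [Field F] [CommRing K] [Nontrivial K]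
    [Algebra F K] {A : Matrix ι ι F} {p : F[X]}
    (h : HasOnlyEvenCells (p.map (algebraMap F K))
      (AEval' (Matrix.toLin' (A.map (algebraMap F K))))) :
    HasOnlyEvenCells p (AEval' (Matrix.toLin' A)) := by
  rw [hasOnlyEvenCells_aeval'_iff, aeval_toLin'] at h ⊢
  rw [aeval_map_algebraMap_map] at h
  exact h.toLin'_of_map

theorem sq_add_self_ne_zero_iff {R : Type*} [CommRing R] [IsDomain R] [CharP R 2] {c : R} :
    c ^ 2 + c ≠ 0 ↔ c ≠ 0 ∧ c ≠ 1 := by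
  rw [show c ^ 2 + c = c * (c - 1) by rw [CharTwo.sub_eq_add]; ring, mul_ne_zero_iff, sub_ne_zero]

variable {F K : Type*} [Field F] [Field K] [Algebra F K]

theorem IsSumOfTwoIdempotents.hasOnlyEvenCells_X_sub_C [CharP K 2] {A : Matrix ι ι K}
    (h : IsSumOfTwoIdempotents A) {lam : K} (h0 : lam ≠ 0) (h1 : lam ≠ 1) :
    HasOnlyEvenCells (X - C lam) (AEval' (Matrix.toLin' A)) := by
  rw [← isSumOfTwoIdempotents_toLin'_iff, ← isSumOfTwoIdempotents_lsmul_X_aeval'_iff] at h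
  refine h.hasOnlyEvenCells ((irreducible_X_sub_C lam).coprime_iff_not_dvd.2 ?_)
  rw [dvd_iff_isRoot]
  simpa using sq_add_self_ne_zero_iff.2 ⟨h0, h1⟩

theorem charpoly_smul_aeval'_toLin'_eq_zero {R : Type*} [CommRing R] (A : Matrix ι ι R)
    (x : AEval' (Matrix.toLin' A)) : A.charpoly • x = 0 := by
  obtain ⟨v, rfl⟩ := (AEval'.of (Matrix.toLin' A)).surjective x
  rw [← AEval.of_aeval_smul, aeval_toLin', Matrix.aeval_self_charpoly, map_zero, zero_smul,
    map_zero]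

theorem hasOnlyEvenCells_of_dvd_charpoly [CharP K 2] {A : Matrix ι ι F}
    (hA : (A.charpoly.map (algebraMap F K)).Splits)
    (h : ∀ lam : K, lam ≠ 0 → lam ≠ 1 →
      HasOnlyEvenCells (X - C lam) (AEval' (Matrix.toLin' (A.map (algebraMap F K)))))
    {p : F[X]} (hdvd : p ∣ A.charpoly) (hp : IsCoprime p ((X ^ 2 + X) * derivative p)) :
    HasOnlyEvenCells p (AEval' (Matrix.toLin' A)) := by
  have hsplits : (p.map (algebraMap F K)).Splits :=
    hA.of_dvd (A.charpoly_monic.map _).ne_zero (Polynomial.map_dvd _ hdvd)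
  have hsep : p.Separable := hp.of_mul_right_right
  refine HasOnlyEvenCells.aeval'_of_map (K := K)
    (hasOnlyEvenCells_of_splits hsplits hsep.map fun lam hlam => ?_)
  rw [IsRoot, eval_map_algebraMap] at hlam
  have hlam' : lam ^ 2 + lam ≠ 0 := by
    simpa [hlam] using aeval_ne_zero_of_isCoprime hp.of_mul_right_left lam
  exact h lam (sq_add_self_ne_zero_iff.1 hlam').1 (sq_add_self_ne_zero_iff.1 hlam').2

theorem isSumOfTwoIdempotents_of_hasOnlyEvenCells_X_sub_C [CharP F 2] {A : Matrix ι ι F}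
    (hA : (A.charpoly.map (algebraMap F K)).Splits)
    (h : ∀ lam : K, lam ≠ 0 → lam ≠ 1 →
      HasOnlyEvenCells (X - C lam) (AEval' (Matrix.toLin' (A.map (algebraMap F K))))) :
    IsSumOfTwoIdempotents A := by
  have : CharP K 2 := charP_of_injective_algebraMap' F 2
  rw [← isSumOfTwoIdempotents_toLin'_iff, ← isSumOfTwoIdempotents_lsmul_X_aeval'_iff]
  refine isSumOfTwoIdempotents_lsmul_X_of_hasOnlyEvenCells
    (AEval.isTorsion_of_finiteDimensional F (ι → F) (Matrix.toLin' A)) fun p hp hcop => ?_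
  by_cases hdvd : p ∣ A.charpoly
  · exact hasOnlyEvenCells_of_dvd_charpoly hA h hdvd hcop
  · exact hasOnlyEvenCells_of_isCoprime (hp.coprime_iff_not_dvd.2 hdvd)
      (charpoly_smul_aeval'_toLin'_eq_zero A)

theorem sum_two_idempotents_iff_jordan_cells_even_general [CharP F 2] (A : Matrix ι ι F)
    (hA : (A.charpoly.map (algebraMap F K)).Splits) :
    (∃ P Q : Matrix ι ι F, P ^ 2 = P ∧ Q ^ 2 = Q ∧ A = P + Q) ↔
      ∀ lam : K, lam ≠ 0 → lam ≠ 1 → ∀ k : ℕ, Odd k →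
        ((A.map (algebraMap F K) - lam • 1) ^ (k - 1)).rank +
            ((A.map (algebraMap F K) - lam • 1) ^ (k + 1)).rank =
          2 * ((A.map (algebraMap F K) - lam • 1) ^ k).rank := by
  have : CharP K 2 := charP_of_injective_algebraMap' F 2
  simp only [← hasOnlyEvenCells_X_sub_C_iff_rank]
  constructor
  · intro (h : IsSumOfTwoIdempotents A) lam h0 h1
    exact (h.map (algebraMap F K).mapMatrix).hasOnlyEvenCells_X_sub_C h0 h1
  · exact isSumOfTwoIdempotents_of_hasOnlyEvenCells_X_sub_C hA

end Matrices

/-- Over a field `F` of characteristic 2, a matrix `A` is the sum of two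
idempotent matrices iff for every eigenvalue `λ ∉ {0, 1}` of `A` in an
algebraic closure of `F`, all Jordan cells of `A` attached to `λ` are
even-sized. The Jordan cell condition is expressed via ranks: the number of
Jordan cells of size exactly `k` for `λ` equals
`rank((A - λ)^(k-1)) - 2·rank((A - λ)^k) + rank((A - λ)^(k+1))`, so all cells
are even-sized iff this quantity vanishes for every odd `k`. -/
theorem sum_two_idempotents_iff_jordan_cells_even (F : Type*) [Field F]
    [CharP F 2] (n : ℕ) (A : Matrix (Fin n) (Fin n) F) :
    (∃ P Q : Matrix (Fin n) (Fin n) F, P ^ 2 = P ∧ Q ^ 2 = Q ∧ A = P + Q) ↔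
      (∀ lam : AlgebraicClosure F, lam ≠ 0 → lam ≠ 1 →
        ∀ k : ℕ, Odd k →
          ((A.map (algebraMap F (AlgebraicClosure F)) - lam • 1) ^ (k - 1)).rank +
            ((A.map (algebraMap F (AlgebraicClosure F)) - lam • 1) ^ (k + 1)).rank =
          2 * ((A.map (algebraMap F (AlgebraicClosure F)) - lam • 1) ^ k).rank) :=
  sum_two_idempotents_iff_jordan_cells_even_general A (IsAlgClosed.splits _)
end

section
/- Let V be an infinite-dimensional vector space over a field F and u a finite-rank endomorphism of V with trace zero. Then u is the sum of three square-zero endomorphisms of V. -/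
/-!
Factor `u = P ∘ Q` through its range. Since `Q ∘ P` has trace zero, it is a commutator `XY - YX` by
the theorem of Albert and Muckenhoupt. The kernel of `u` has room for a copy `ι` of the range, split
off by a map `π` which vanishes on the range. Conjugating by a unipotent turns `u` into
`(K + ιX) ∘ (Q - Yπ)` with `QK = XY` and `πK = 0`, whose diagonal blocks are `KQ` and `-ιXYπ`. The
endomorphism `(K + ι) ∘ (Q - XYπ)` has the same diagonal blocks and square zero, so what is left is
a sum of two off-diagonal, hence square-zero, blocks.

For the theorem of Albert and Muckenhoupt, nondegeneracy of the trace form shows that a matrix is a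
commutator `XY - YX` with prescribed `X` as soon as it is trace-orthogonal to the centralizer of
`X`. Let `X` be the `s`-step shift plus a diagonal matrix separating the residue classes of the
indices mod `s`. A matrix commuting with `X` vanishes between different classes, and inside a class
it is upper triangular with constant diagonal. When every vector is an eigenvector, `s = 1`
suffices. Otherwise there is a Hessenberg form with nonzero entry `(1, 0)`; conjugating by a
transvection makes the sum of the even diagonal entries vanish, and `s = 2` applies.
-/

open Matrix

/-- The elements of the form `x * y - y * x`, as opposed to group commutators. Stated for arbitrary
rings so that it can be transported between matrices and endomorphisms. -/
def IsAddCommutator {R : Type*} [NonUnitalNonAssocRing R] (a : R) : Prop :=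
  ∃ x y, a = x * y - y * x

/-- Sums of exactly three square-zero elements of a ring, any of which may be `0`. -/
def IsSumOfThreeSquareZero {R : Type*} [Semiring R] (a : R) : Prop :=
  ∃ x y z : R, x ^ 2 = 0 ∧ y ^ 2 = 0 ∧ z ^ 2 = 0 ∧ a = x + y + z

theorem IsAddCommutator.map {R S G : Type*} [NonUnitalNonAssocRing R] [NonUnitalNonAssocRing S]
    [FunLike G R S] [NonUnitalRingHomClass G R S] (φ : G) {a : R} :
    IsAddCommutator a → IsAddCommutator (φ a) := by
  rintro ⟨x, y, rfl⟩
  exact ⟨φ x, φ y, by simp only [map_sub, map_mul]⟩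

theorem IsAddCommutator.of_units_conj {R : Type*} [Ring R] {a : R} (g : Rˣ)
    (h : IsAddCommutator (g * a * ↑g⁻¹)) : IsAddCommutator a := by
  simpa [ConjAct.units_smul_def, mul_assoc] using
    h.map (MulSemiringAction.toRingEquiv _ R (ConjAct.toConjAct g⁻¹))

section
variable {ι K : Type*} [Fintype ι]

theorem exists_forall_eq_trace_mul [CommSemiring K] (φ : Matrix ι ι K →ₗ[K] K) :
    ∃ C : Matrix ι ι K, ∀ M, φ M = (C * M).trace := by
  classical
  refine ⟨of fun i j => φ (single j i 1), fun M => ?_⟩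
  conv_lhs => rw [matrix_eq_sum_single M]
  simp only [map_sum, trace, diag_apply, mul_apply, of_apply]
  rw [Finset.sum_comm]
  refine Finset.sum_congr rfl fun i _ => Finset.sum_congr rfl fun j _ => ?_
  rw [mul_comm, ← smul_eq_mul, ← map_smul, smul_single, smul_eq_mul, mul_one]

theorem isAddCommutator_of_forall_commute_trace_mul_eq_zero [Field K] (X R : Matrix ι ι K)
    (h : ∀ C, Commute C X → (C * R).trace = 0) : IsAddCommutator R := by
  let ad : Module.End K (Matrix ι ι K) := LinearMap.mulLeft K X - LinearMap.mulRight K X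
  suffices hR : R ∈ LinearMap.range ad by
    obtain ⟨Y, rfl⟩ := hR
    exact ⟨X, Y, rfl⟩
  by_contra hR
  obtain ⟨φ, hφR, hφ⟩ := Submodule.exists_le_ker_of_notMem hR
  obtain ⟨C, hC⟩ := exists_forall_eq_trace_mul φ
  refine hφR ((hC R).trans (h C (ext_iff_trace_mul_right.2 fun Y => sub_eq_zero.1 ?_)))
  calc (C * X * Y).trace - (X * C * Y).trace = (C * (X * Y - Y * X)).trace := by
        rw [mul_sub, trace_sub, ← mul_assoc, ← mul_assoc, trace_mul_cycle C Y X]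
    _ = φ (ad Y) := (hC _).symm
    _ = 0 := hφ (LinearMap.mem_range_self ad Y)

end

/-- The `s`-th superdiagonal shift plus a diagonal matrix whose entries depend only on the index
modulo `s`. They are encoded by a function on `ZMod s`, so that `Function.Injective p` says that the
diagonal separates the residue classes. -/
def shiftAddDiag {R : Type*} [Semiring R] (n s : ℕ) (p : ZMod s → R) : Matrix (Fin n) (Fin n) R :=
  of fun i j => (if (i : ℕ) + s = j then 1 else 0) + if i = j then p (i : ℕ) else 0

section
variable {R : Type*} {n s : ℕ}

theorem shiftAddDiag_mul_apply [Semiring R] (p : ZMod s → R) (C : Matrix (Fin n) (Fin n) R)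
    (i j : Fin n) :
    (shiftAddDiag n s p * C) i j =
      (if h : i + s < n then C ⟨i + s, h⟩ j else 0) + p (i : ℕ) * C i j := by
  simp only [shiftAddDiag, mul_apply, of_apply, add_mul, ite_mul, one_mul, zero_mul,
    Finset.sum_add_distrib, Finset.sum_ite_eq, Finset.mem_univ, if_true]
  congr 1
  split_ifs with h
  · rw [Finset.sum_eq_single ⟨i + s, h⟩] <;> simp +contextual [Fin.ext_iff, eq_comm]
  · exact Finset.sum_eq_zero fun k _ => if_neg (by omega)

theorem mul_shiftAddDiag_apply [Semiring R] (p : ZMod s → R) (C : Matrix (Fin n) (Fin n) R)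
    (i j : Fin n) :
    (C * shiftAddDiag n s p) i j =
      (if s ≤ j then C i ⟨j - s, by omega⟩ else 0) + C i j * p (j : ℕ) := by
  simp only [shiftAddDiag, mul_apply, of_apply, mul_add, mul_ite, mul_one, mul_zero,
    Finset.sum_add_distrib, Finset.sum_ite_eq', Finset.mem_univ, if_true]
  congr 1
  split_ifs with h
  · rw [Finset.sum_eq_single ⟨j - s, by omega⟩]
    · simp [h]
    · exact fun k _ hk => if_neg fun hkj => hk (Fin.ext (by simp only; omega))
    · simp
  · exact Finset.sum_eq_zero fun k _ => if_neg (by omega)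

variable [CommRing R] {p : ZMod s → R} {C : Matrix (Fin n) (Fin n) R}

theorem apply_eq_zero_of_commute_shiftAddDiag_of_natCast_ne [NoZeroDivisors R] [NeZero s]
    (hp : Function.Injective p) (hC : Commute C (shiftAddDiag n s p)) {i j : Fin n}
    (hij : ((i : ℕ) : ZMod s) ≠ (j : ℕ)) : C i j = 0 := by
  have hs : 0 < s := Nat.pos_of_neZero s
  induction hm : (j : ℕ) + (n - i) using Nat.strong_induction_on generalizing i j with
  | _ m ih =>
    have h := congrFun₂ hC.eq i j
    have hleft : (if s ≤ j then C i ⟨j - s, by omega⟩ else 0) = 0 := by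
      split_ifs with hj
      · exact ih _ (by simp only; omega) (by simpa [Nat.cast_sub hj] using hij) rfl
      · rfl
    have hright : (if h : i + s < n then C ⟨i + s, h⟩ j else 0) = 0 := by
      split_ifs with hi
      · exact ih _ (by simp only; omega) (by simpa using hij) rfl
      · rfl
    rw [mul_shiftAddDiag_apply, shiftAddDiag_mul_apply, hleft, hright, zero_add, zero_add,
      mul_comm, ← sub_eq_zero, ← sub_mul] at h
    exact (mul_eq_zero.1 h).resolve_left (sub_ne_zero.2 (hp.ne hij.symm))

theorem apply_add_of_commute_shiftAddDiag (hC : Commute C (shiftAddDiag n s p)) {i j : Fin n}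
    (hij : ((i : ℕ) : ZMod s) = (j : ℕ)) (hi : i + s < n) :
    C ⟨i + s, hi⟩ j = if s ≤ j then C i ⟨j - s, by omega⟩ else 0 := by
  have h := congrFun₂ hC.eq i j
  rw [mul_shiftAddDiag_apply, shiftAddDiag_mul_apply, dif_pos hi, hij, mul_comm (C i j)] at h
  exact (add_right_cancel h).symm

theorem apply_eq_zero_of_commute_shiftAddDiag_of_lt [NeZero s]
    (hC : Commute C (shiftAddDiag n s p)) {i j : Fin n} (hji : j < i)
    (hij : ((i : ℕ) : ZMod s) = (j : ℕ)) : C i j = 0 := by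
  induction hm : (j : ℕ) using Nat.strong_induction_on generalizing i j with
  | _ m ih =>
    have hs : s ≤ i := by
      have := ((ZMod.natCast_eq_natCast_iff _ _ _).1 hij.symm).add_le_of_lt hji
      omega
    have hpos : 0 < s := Nat.pos_of_neZero s
    have hi : ((i - s : ℕ) : ZMod s) = (j : ℕ) := by simpa [Nat.cast_sub hs] using hij
    have h := apply_add_of_commute_shiftAddDiag hC (i := ⟨i - s, by omega⟩) hi (by simp only; omega)
    simp only [Nat.sub_add_cancel hs, Fin.eta] at h
    rw [h]
    split_ifs with hj
    · refine ih (j - s) (by omega) (Fin.lt_def.2 ?_) ?_ rfl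
      · simp only
        have : (j : ℕ) < i := hji
        omega
      · simpa [Nat.cast_sub hs, Nat.cast_sub hj] using hij
    · rfl

theorem diag_eq_of_commute_shiftAddDiag (hC : Commute C (shiftAddDiag n s p)) {i j : Fin n}
    (hij : ((i : ℕ) : ZMod s) = (j : ℕ)) : C i i = C j j := by
  wlog h : i ≤ j generalizing i j
  · exact (this hij.symm (le_of_not_ge h)).symm
  obtain ⟨k, hk⟩ := (Nat.modEq_iff_exists_eq_add h).1 ((ZMod.natCast_eq_natCast_iff _ _ _).1 hij)
  induction k generalizing j with
  | zero => rw [Fin.ext (by simpa using hk : (j : ℕ) = i)]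
  | succ k ih =>
    have hkn : i + s * k + s < n := by rw [add_assoc, ← mul_add_one, ← hk]; exact j.2
    rw [ih (j := ⟨i + s * k, by omega⟩) (by simp) (Fin.le_def.2 (by simp)) rfl]
    have h := apply_add_of_commute_shiftAddDiag hC (i := ⟨i + s * k, by omega⟩) (j := j)
      (by simp [hk]) hkn
    rw [if_pos (by rw [hk, mul_add_one]; omega)] at h
    convert h.symm using 2 <;> ext <;> simp only [hk, mul_add_one] <;> omega

end

theorem isAddCommutator_of_sum_diag_natCast_eq_zero {K : Type*} [Field K] {n s : ℕ} [NeZero s]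
    {p : ZMod s → K} (hp : Function.Injective p) {R : Matrix (Fin n) (Fin n) K}
    (hlower : ∀ i j : Fin n, j < i → ((i : ℕ) : ZMod s) = (j : ℕ) → R i j = 0)
    (hdiag : ∀ c : ZMod s, ∑ i : Fin n with (i.val : ZMod s) = c, R i i = 0) :
    IsAddCommutator R := by
  refine isAddCommutator_of_forall_commute_trace_mul_eq_zero (shiftAddDiag n s p) R fun C hC => ?_
  have hoff : ∀ i j, j ≠ i → C i j * R j i = 0 := by
    intro i j hji
    by_cases hmod : ((i : ℕ) : ZMod s) = (j : ℕ)
    · rcases hji.lt_or_gt with hlt | hgt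
      · rw [apply_eq_zero_of_commute_shiftAddDiag_of_lt hC hlt hmod, zero_mul]
      · rw [hlower j i hgt hmod.symm, mul_zero]
    · rw [apply_eq_zero_of_commute_shiftAddDiag_of_natCast_ne hp hC hmod, zero_mul]
  have hclass : ∀ c : ZMod s, ∑ i : Fin n with (i.val : ZMod s) = c, C i i * R i i = 0 := by
    intro c
    rcases ({i | (i.val : ZMod s) = c} : Finset (Fin n)).eq_empty_or_nonempty with h | ⟨k, hk⟩
    · rw [h, Finset.sum_empty]
    · have hconst : ∀ i ∈ ({i | (i.val : ZMod s) = c} : Finset (Fin n)),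
          C i i * R i i = C k k * R i i := fun i hi => by
        rw [diag_eq_of_commute_shiftAddDiag hC
          ((Finset.mem_filter.1 hi).2.trans (Finset.mem_filter.1 hk).2.symm)]
      rw [Finset.sum_congr rfl hconst, ← Finset.mul_sum, hdiag, mul_zero]
  calc (C * R).trace = ∑ i, C i i * R i i :=
        Finset.sum_congr rfl fun i _ => Fintype.sum_eq_single i fun j hj => hoff i j hj
    _ = ∑ c, ∑ i : Fin n with (i.val : ZMod s) = c, C i i * R i i :=
        (Finset.sum_fiberwise _ _ _).symm
    _ = 0 := Finset.sum_eq_zero fun c _ => hclass c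

theorem isAddCommutator_of_blockTriangular {K : Type*} [Field K] {n : ℕ}
    {R : Matrix (Fin n) (Fin n) K} (hR : R.BlockTriangular id) (htr : R.trace = 0) :
    IsAddCommutator R :=
  isAddCommutator_of_sum_diag_natCast_eq_zero (s := 1) (p := fun _ => 0)
    (Function.injective_of_subsingleton _) (fun _ _ h _ => hR h)
    fun c => by simpa [Subsingleton.elim _ c, trace] using htr

/-- Upper Hessenberg matrices: entries below the first subdiagonal vanish. -/
def IsUpperHessenberg {R : Type*} [Zero R] {n : ℕ} (M : Matrix (Fin n) (Fin n) R) : Prop :=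
  ∀ i j : Fin n, (j : ℕ) + 1 < i → M i j = 0

section
variable {K : Type*} [Field K]

theorem IsUpperHessenberg.isAddCommutator_of_sum_even_eq_zero {n : ℕ}
    {R : Matrix (Fin n) (Fin n) K} (hR : IsUpperHessenberg R) (htr : R.trace = 0)
    (heven : ∑ i : Fin n with Even i.val, R i i = 0) : IsAddCommutator R := by
  have hzmod (c : ZMod 2) : c = 0 ∨ c = 1 := by decide +revert
  have hp : Function.Injective fun c : ZMod 2 => if c = 0 then (0 : K) else 1 := by
    intro a b
    rcases hzmod a with rfl | rfl <;> rcases hzmod b with rfl | rfl <;> simp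
  refine isAddCommutator_of_sum_diag_natCast_eq_zero hp (fun i j hji hmod => hR i j ?_) fun c => ?_
  · have := ((ZMod.natCast_eq_natCast_iff _ _ _).1 hmod.symm).add_le_of_lt hji
    omega
  · rcases hzmod c with rfl | rfl
    · simpa [ZMod.natCast_eq_zero_iff_even] using heven
    · have h := Finset.sum_filter_add_sum_filter_not Finset.univ
        (fun i : Fin n => Even i.val) fun i => R i i
      rw [heven, zero_add] at h
      simpa [ZMod.natCast_eq_one_iff_odd] using h.trans htr

theorem IsUpperHessenberg.isAddCommutator_of_apply_one_zero_ne_zero {n : ℕ}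
    {R : Matrix (Fin (n + 2)) (Fin (n + 2)) K} (hR : IsUpperHessenberg R)
    (htr : R.trace = 0) (hne : R 1 0 ≠ 0) : IsAddCommutator R := by
  set d : K := -(∑ i : Fin (n + 2) with Even i.val, R i i) / R 1 0 with hd
  have hinv (c : K) : transvection (0 : Fin (n + 2)) 1 c * transvection 0 1 (-c) = 1 := by
    rw [transvection_mul_transvection_same _ _ zero_ne_one, add_neg_cancel, transvection_zero]
  let g : (Matrix (Fin (n + 2)) (Fin (n + 2)) K)ˣ :=
    ⟨transvection 0 1 d, transvection 0 1 (-d), hinv d, by simpa using hinv (-d)⟩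
  refine .of_units_conj g (IsUpperHessenberg.isAddCommutator_of_sum_even_eq_zero ?_ ?_ ?_)
  · intro i j hij
    have hi : i ≠ 0 := by rintro rfl; simp at hij
    rcases eq_or_ne j 1 with rfl | hj
    · have := hR i 0 (by simp only [Fin.val_one, Fin.val_zero] at hij ⊢; omega)
      simp [g, hi, this, hR i 1 hij]
    · simp [g, hi, hj, hR i j hij]
  · rw [trace_units_conj, htr]
  · have hdiag : ∀ i ∈ ({i | Even i.val} : Finset (Fin (n + 2))),
        (g.val * R * g⁻¹.val) i i = R i i + if i = 0 then d * R 1 0 else 0 := by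
      intro i hi
      have hi1 : i ≠ 1 := by rintro rfl; simp at hi
      rcases eq_or_ne i 0 with rfl | hi0
      · simp [g]
      · simp [g, hi0, hi1]
    rw [Finset.sum_congr rfl hdiag, Finset.sum_add_distrib, Finset.sum_ite_eq', if_pos (by simp),
      hd, div_mul_cancel₀ _ hne, add_neg_cancel]

end

theorem exists_notMem_mem_sup_span_singleton {R M : Type*} [Semiring R]
    [AddCommMonoid M] [Module R M] {S : Submodule R M} (hS : S ≠ ⊤) (w : M) :
    ∃ v ∉ S, w ∈ S ⊔ Submodule.span R {v} := by
  by_cases hw : w ∈ S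
  · obtain ⟨v, -, hv⟩ := SetLike.exists_of_lt hS.lt_top
    exact ⟨v, hv, Submodule.mem_sup_left hw⟩
  · exact ⟨w, hw, Submodule.mem_sup_right (Submodule.mem_span_singleton_self w)⟩

section
variable {K V : Type*} [DivisionRing K] [AddCommGroup V] [Module K V]

theorem exists_linearIndependent_forall_apply_mem_span (f : Module.End K V) {x : V} (hx : x ≠ 0)
    {k : ℕ} (hk : k + 1 ≤ Module.finrank K V) :
    ∃ e : ℕ → V, e 0 = x ∧ LinearIndependent K (fun i : Fin (k + 1) => e i) ∧
      ∀ j < k, f (e j) ∈ Submodule.span K (e '' Set.Iic (j + 1)) := by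
  induction k with
  | zero => exact ⟨fun _ => x, rfl, .of_subsingleton (ι := Fin 1) 0 hx, by simp⟩
  | succ k ih =>
    obtain ⟨e, h0, hli, hf⟩ := ih (by omega)
    set S := Submodule.span K (Set.range fun i : Fin (k + 1) => e i) with hS
    have hStop : S ≠ ⊤ := fun h => by
      have hcard := finrank_span_eq_card hli
      rw [← hS, h, finrank_top, Fintype.card_fin] at hcard
      omega
    obtain ⟨v, hvS, hv⟩ := exists_notMem_mem_sup_span_singleton hStop (f (e k))
    have hold {j : ℕ} (hj : j ≤ k) : Function.update e (k + 1) v j = e j :=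
      Function.update_of_ne (by omega) _ _
    refine ⟨Function.update e (k + 1) v, (hold k.zero_le).trans h0, ?_, fun j hj => ?_⟩
    · convert linearIndependent_finSnoc.2 ⟨hli, hvS⟩ using 1
      ext i
      refine Fin.lastCases ?_ (fun i => ?_) i
      · simp
      · rw [Fin.snoc_castSucc, Fin.val_castSucc, hold (by omega)]
    · rw [hold (by omega)]
      rcases Nat.lt_succ_iff_lt_or_eq.1 hj with hj | rfl
      · rw [Set.image_congr fun i hi => hold ((Set.mem_Iic.1 hi).trans hj)]
        exact hf j hj
      · refine (sup_le (Submodule.span_le.2 ?_) (Submodule.span_le.2 ?_) :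
          S ⊔ Submodule.span K {v} ≤ _) hv
        · rintro _ ⟨i, rfl⟩
          exact Submodule.subset_span ⟨i, Set.mem_Iic.2 (by omega), hold (by omega)⟩
        · rintro _ rfl
          exact Submodule.subset_span ⟨j + 1, Set.mem_Iic.2 le_rfl, Function.update_self ..⟩

end

section
variable {K V : Type*} [Field K] [AddCommGroup V] [Module K V]

theorem exists_basis_isUpperHessenberg_toMatrix {n : ℕ} (hn : Module.finrank K V = n + 1)
    (f : Module.End K V) {x : V} (hx : x ≠ 0) :
    ∃ b : Module.Basis (Fin (n + 1)) K V,
      b 0 = x ∧ IsUpperHessenberg (LinearMap.toMatrix b b f) := by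
  obtain ⟨e, h0, hli, hf⟩ := exists_linearIndependent_forall_apply_mem_span f hx hn.ge
  let b := basisOfLinearIndependentOfCardEqFinrank hli (by simp [hn])
  have hb (i) : b i = e i := by simp [b]
  refine ⟨b, (hb 0).trans h0, fun i j hij => ?_⟩
  have hle : Submodule.span K (e '' Set.Iic ((j : ℕ) + 1)) ≤ LinearMap.ker (b.coord i) := by
    refine Submodule.span_le.2 ?_
    rintro _ ⟨l, hl, rfl⟩
    have hlt : l < i := (Set.mem_Iic.1 hl).trans_lt hij
    have hel : e l = b ⟨l, hlt.trans i.2⟩ := (hb ⟨l, hlt.trans i.2⟩).symm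
    simp [hel, Fin.ext_iff, hlt.ne']
  rw [LinearMap.toMatrix_apply, hb]
  exact hle (hf j (by omega))

theorem IsAddCommutator.of_toMatrix {ι : Type*} [Fintype ι] [DecidableEq ι]
    (b : Module.Basis ι K V) {f : Module.End K V}
    (h : IsAddCommutator (LinearMap.toMatrix b b f)) : IsAddCommutator f := by
  rw [← (LinearMap.toMatrixAlgEquiv b).symm_apply_apply f]
  exact h.map _

theorem isAddCommutator_of_trace_eq_zero [FiniteDimensional K V] {f : Module.End K V}
    (hf : LinearMap.trace K V f = 0) : IsAddCommutator f := by
  by_cases hscalar : ∀ x, f x ∈ Submodule.span K {x}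
  · let b := Module.finBasis K V
    refine .of_toMatrix b (isAddCommutator_of_blockTriangular (fun i j hij => ?_) ?_)
    · obtain ⟨c, hc⟩ := Submodule.mem_span_singleton.1 (hscalar (b j))
      have hji : i ≠ j := ne_of_gt hij
      simp [LinearMap.toMatrix_apply, ← hc, hji]
    · rwa [← LinearMap.trace_eq_matrix_trace]
  · push Not at hscalar
    obtain ⟨x, hx⟩ := hscalar
    have hx0 : x ≠ 0 := by rintro rfl; simp at hx
    have hdim : 2 ≤ Module.finrank K V := by
      simpa using ((LinearIndependent.pair_iff' hx0).2
        fun a ha => hx (Submodule.mem_span_singleton.2 ⟨a, ha⟩)).fintype_card_le_finrank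
    obtain ⟨n, hn⟩ := Nat.exists_eq_add_of_le' hdim
    obtain ⟨b, rfl, hH⟩ := exists_basis_isUpperHessenberg_toMatrix hn f hx0
    refine .of_toMatrix b (hH.isAddCommutator_of_apply_one_zero_ne_zero ?_ fun h10 => hx ?_)
    · rwa [← LinearMap.trace_eq_matrix_trace]
    · have hrepr (i) (hi : i ≠ 0) : b.repr (f (b 0)) i = 0 := by
        rw [← LinearMap.toMatrix_apply]
        rcases eq_or_ne i 1 with rfl | hi1
        · exact h10
        · refine hH i 0 ?_
          simp only [ne_eq, Fin.ext_iff, Fin.val_zero, Fin.val_one] at hi hi1 ⊢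
          omega
      rw [← b.sum_repr (f (b 0)),
        Fintype.sum_eq_single 0 fun i hi => by rw [hrepr i hi, zero_smul]]
      exact Submodule.smul_mem _ _ (Submodule.mem_span_singleton_self _)

end

theorem IsSumOfThreeSquareZero.of_units_conj {R : Type*} [Semiring R] {a : R} (g : Rˣ)
    (h : IsSumOfThreeSquareZero (g * a * ↑g⁻¹)) : IsSumOfThreeSquareZero a := by
  obtain ⟨x, y, z, hx, hy, hz, hsum⟩ := h
  have hconj {w : R} (hw : w ^ 2 = 0) : (↑g⁻¹ * w * g) ^ 2 = 0 := by
    rw [Units.conj_pow', hw, mul_zero, zero_mul]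
  refine ⟨_, _, _, hconj hx, hconj hy, hconj hz, ?_⟩
  rw [← add_mul, ← mul_add, ← add_mul, ← mul_add, ← hsum]
  simp [mul_assoc]

section
variable {R V I : Type*} [Ring R] [AddCommGroup V] [Module R V] [AddCommGroup I] [Module R I]
  {ι P : I →ₗ[R] V} {π Q : V →ₗ[R] I}

theorem exists_leftInverse_comp_eq_zero (hP : ∃ ρ : V →ₗ[R] I, ρ ∘ₗ P = LinearMap.id)
    (hπι : π ∘ₗ ι = LinearMap.id) (hπP : π ∘ₗ P = 0) :
    ∃ ρ : V →ₗ[R] I, ρ ∘ₗ P = LinearMap.id ∧ ρ ∘ₗ ι = 0 := by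
  obtain ⟨ρ, hρ⟩ := hP
  refine ⟨ρ ∘ₗ (LinearMap.id - ι ∘ₗ π), ?_, ?_⟩
  · rw [LinearMap.comp_assoc, LinearMap.sub_comp, LinearMap.comp_assoc, hπP, LinearMap.comp_zero,
      sub_zero, LinearMap.id_comp, hρ]
  · rw [LinearMap.comp_assoc, LinearMap.sub_comp, LinearMap.comp_assoc, hπι, LinearMap.id_comp,
      LinearMap.comp_id, sub_self, LinearMap.comp_zero]

theorem exists_rightInverse_comp_eq_zero (hQ : ∃ σ : I →ₗ[R] V, Q ∘ₗ σ = LinearMap.id)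
    (hπι : π ∘ₗ ι = LinearMap.id) (hQι : Q ∘ₗ ι = 0) :
    ∃ σ : I →ₗ[R] V, Q ∘ₗ σ = LinearMap.id ∧ π ∘ₗ σ = 0 := by
  obtain ⟨σ, hσ⟩ := hQ
  refine ⟨(LinearMap.id - ι ∘ₗ π) ∘ₗ σ, ?_, ?_⟩
  · rw [← LinearMap.comp_assoc, LinearMap.comp_sub, ← LinearMap.comp_assoc, hQι,
      LinearMap.zero_comp, sub_zero, LinearMap.comp_id, hσ]
  · rw [← LinearMap.comp_assoc, LinearMap.comp_sub, ← LinearMap.comp_assoc, hπι,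
      LinearMap.id_comp, LinearMap.comp_id, sub_self, LinearMap.zero_comp]

theorem isSumOfThreeSquareZero_add_comp_comp_sub_comp (hπι : π ∘ₗ ι = LinearMap.id)
    (hQι : Q ∘ₗ ι = 0) (hπP : π ∘ₗ P = 0) {X Y : Module.End R I} (hQP : Q ∘ₗ P = X * Y) :
    IsSumOfThreeSquareZero ((P + ι ∘ₗ X) ∘ₗ (Q - Y ∘ₗ π) : Module.End R V) := by
  rw [LinearMap.ext_iff] at hπι hQι hπP hQP
  simp only [LinearMap.comp_apply, LinearMap.id_apply, LinearMap.zero_apply,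
    Module.End.mul_apply] at hπι hQι hπP hQP
  refine ⟨(P + ι) ∘ₗ (Q - X ∘ₗ Y ∘ₗ π), P ∘ₗ (X ∘ₗ Y - Y) ∘ₗ π, ι ∘ₗ (X - 1) ∘ₗ Q,
    ?_, ?_, ?_, ?_⟩
  · ext v
    simp [sq, hQP, hπP, hQι, hπι]
  · ext v
    simp [sq, hπP]
  · ext v
    simp [sq, hQι]
  · ext v
    simp only [LinearMap.comp_apply, LinearMap.sub_apply, LinearMap.add_apply, map_sub,
      Module.End.one_apply]
    abel

theorem exists_units_conj_comp_eq (hP : ∃ ρ : V →ₗ[R] I, ρ ∘ₗ P = LinearMap.id)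
    (hQ : ∃ σ : I →ₗ[R] V, Q ∘ₗ σ = LinearMap.id) (hπι : π ∘ₗ ι = LinearMap.id)
    (hQι : Q ∘ₗ ι = 0) (hπP : π ∘ₗ P = 0) {X Y : Module.End R I} (hQP : Q ∘ₗ P = X * Y - Y * X) :
    ∃ (g : (Module.End R V)ˣ) (K : I →ₗ[R] V), π ∘ₗ K = 0 ∧ Q ∘ₗ K = X * Y ∧
      g.val * (P ∘ₗ Q) * g⁻¹.val = (K + ι ∘ₗ X) ∘ₗ (Q - Y ∘ₗ π) := by
  obtain ⟨ρ, hρP, hρι⟩ := exists_leftInverse_comp_eq_zero hP hπι hπP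
  obtain ⟨σ, hQσ, hπσ⟩ := exists_rightInverse_comp_eq_zero hQ hπι hQι
  rw [LinearMap.ext_iff] at hπι hQι hπP hρP hρι hQσ hπσ hQP
  simp only [LinearMap.comp_apply, LinearMap.id_apply, LinearMap.zero_apply, LinearMap.sub_apply,
    Module.End.mul_apply] at hπι hQι hπP hρP hρι hQσ hπσ hQP
  let M : Module.End R V := σ ∘ₗ Y ∘ₗ π
  let N : Module.End R V := ι ∘ₗ X ∘ₗ ρ
  let g : (Module.End R V)ˣ :=
    ⟨(1 + M) * (1 + N), (1 - N) * (1 - M), by ext v; simp [M, N, hρι, hπσ],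
      by ext v; simp [M, N, hρι, hπσ]⟩
  let K : I →ₗ[R] V := P + σ ∘ₗ Y ∘ₗ X
  have hgP : g.val ∘ₗ P = K + ι ∘ₗ X := by
    ext v
    simp only [g, K, M, N, hρP, hπP, hπι, LinearMap.comp_apply, Module.End.mul_apply,
      LinearMap.add_apply, Module.End.one_apply, map_add, map_zero, add_zero]
    abel
  have hQg : Q ∘ₗ g⁻¹.val = Q - Y ∘ₗ π := by
    ext v
    simp [g, M, N, hQι, hQσ]
  refine ⟨g, K, ?_, ?_, ?_⟩
  · ext v
    simp [K, hπP, hπσ]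
  · ext v
    simp [K, hQP, hQσ]
  · rw [← hgP, ← hQg]
    rfl

theorem isSumOfThreeSquareZero_comp (hP : ∃ ρ : V →ₗ[R] I, ρ ∘ₗ P = LinearMap.id)
    (hQ : ∃ σ : I →ₗ[R] V, Q ∘ₗ σ = LinearMap.id) (hπι : π ∘ₗ ι = LinearMap.id)
    (hQι : Q ∘ₗ ι = 0) (hπP : π ∘ₗ P = 0) (hQP : IsAddCommutator (Q ∘ₗ P : Module.End R I)) :
    IsSumOfThreeSquareZero (P ∘ₗ Q : Module.End R V) := by
  obtain ⟨X, Y, hXY⟩ := hQP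
  obtain ⟨g, K, hπK, hQK, hg⟩ := exists_units_conj_comp_eq hP hQ hπι hQι hπP hXY
  refine .of_units_conj g ?_
  rw [hg]
  exact isSumOfThreeSquareZero_add_comp_comp_sub_comp hπι hQι hπK hQK

end

section
variable {K V : Type*} [DivisionRing K] [AddCommGroup V] [Module K V]

open Cardinal

theorem exists_leftInverse_range_le_le_ker_of_injective {I : Type*} [AddCommGroup I] [Module K I]
    {p q : Submodule K V} {j : I →ₗ[K] p.map q.mkQ} (hj : Function.Injective j) :
    ∃ (ι : I →ₗ[K] V) (π : V →ₗ[K] I),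
      π ∘ₗ ι = LinearMap.id ∧ LinearMap.range ι ≤ p ∧ q ≤ LinearMap.ker π := by
  obtain ⟨s, hs⟩ := (q.mkQ.submoduleMap p).exists_rightInverse_of_surjective
    (LinearMap.range_eq_top.2 (q.mkQ.submoduleMap_surjective p))
  let ι : I →ₗ[K] V := p.subtype ∘ₗ s ∘ₗ j
  have hι (v) : q.mkQ (ι v) = j v := congrArg Subtype.val (LinearMap.congr_fun hs (j v))
  obtain ⟨π, hπ⟩ := (q.mkQ ∘ₗ ι).exists_leftInverse_of_injective (LinearMap.ker_eq_bot.2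
    fun v w hvw => hj (Subtype.ext (by simpa only [LinearMap.comp_apply, hι] using hvw)))
  refine ⟨ι, π ∘ₗ q.mkQ, hπ, ?_, ?_⟩
  · rintro _ ⟨v, rfl⟩
    exact (s (j v)).2
  · intro v hv
    simp [(Submodule.Quotient.mk_eq_zero q).2 hv]

theorem rank_le_rank_map_mkQ_add_rank (p q : Submodule K V) :
    Module.rank K p ≤ Module.rank K (p.map q.mkQ) + Module.rank K q :=
  calc Module.rank K p ≤ Module.rank K ((p.map q.mkQ).comap q.mkQ) :=
        Submodule.rank_mono (Submodule.le_comap_map _ _)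
    _ ≤ Module.rank K (p.map q.mkQ) + Module.rank K (LinearMap.ker q.mkQ) := by
        simpa only [lift_id] using q.mkQ.lift_rank_comap_le (p.map q.mkQ)
    _ = Module.rank K (p.map q.mkQ) + Module.rank K q := by rw [Submodule.ker_mkQ]

theorem rank_le_rank_map_mkQ_range_ker {u : Module.End K V} (hu : u.rank < ℵ₀)
    (hV : 3 * u.rank ≤ Module.rank K V) :
    u.rank ≤ Module.rank K ((LinearMap.ker u).map (LinearMap.range u).mkQ) := by
  set m := Module.rank K ((LinearMap.ker u).map (LinearMap.range u).mkQ)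
  have h : u.rank + u.rank + u.rank ≤ m + u.rank + u.rank :=
    calc u.rank + u.rank + u.rank = 3 * u.rank := by ring
      _ ≤ Module.rank K V := hV
      _ = Module.rank K (LinearMap.ker u) + u.rank := by
        rw [add_comm, ← LinearMap.rank_range_add_rank_ker u]
      _ ≤ m + u.rank + u.rank := by
        gcongr
        exact rank_le_rank_map_mkQ_add_rank _ _
  rwa [add_le_add_iff_of_lt_aleph0 hu, add_le_add_iff_of_lt_aleph0 hu] at h

end

section
variable {K V : Type*} [Field K] [AddCommGroup V] [Module K V]

theorem finite_rank_trace_zero_sum_three_square_zero_general {u : Module.End K V}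
    (hV : 3 * u.rank ≤ Module.rank K V) {W : Submodule K V} [FiniteDimensional K W]
    (hrange : ∀ x, u x ∈ W) (htrace : LinearMap.trace K W (u.restrict fun x _ => hrange x) = 0) :
    IsSumOfThreeSquareZero u := by
  have hle : LinearMap.range u ≤ W := Set.range_subset_iff.2 hrange
  have : FiniteDimensional K (LinearMap.range u) := Submodule.finiteDimensional_of_le hle
  obtain ⟨j, hj⟩ := rank_le_iff_exists_linearMap.1
    (rank_le_rank_map_mkQ_range_ker (Module.rank_lt_aleph0 K _) hV)
  obtain ⟨ι, π, hπι, hι, hπ⟩ := exists_leftInverse_range_le_le_ker_of_injective hj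
  have htr : LinearMap.trace K _ (u.rangeRestrict ∘ₗ (LinearMap.range u).subtype) = 0 := by
    rw [← htrace]
    exact LinearMap.trace_comp_comm' (Submodule.inclusion hle) (u.rangeRestrict ∘ₗ W.subtype)
  refine isSumOfThreeSquareZero_comp (P := (LinearMap.range u).subtype) (Q := u.rangeRestrict)
    (LinearMap.exists_leftInverse_of_injective _ (Submodule.ker_subtype _))
    (LinearMap.exists_rightInverse_of_surjective _ (LinearMap.range_rangeRestrict u))
    hπι ?_ ?_ (isAddCommutator_of_trace_eq_zero htr)
  · ext v
    exact hι (LinearMap.mem_range_self ι v)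
  · ext v
    exact congrArg Subtype.val (hπ v.2)

end

/-- Let `V` be an infinite-dimensional vector space and `u` a finite-rank
endomorphism of `V` with trace zero (the trace being computed from the
endomorphism induced by `u` on any finite-dimensional subspace `W` containing
the range of `u`). Then `u` is the sum of three square-zero endomorphisms. -/
theorem finite_rank_trace_zero_sum_three_square_zero (F : Type*) [Field F]
    (V : Type*) [AddCommGroup V] [Module F V] (hV : ¬ FiniteDimensional F V)
    (u : Module.End F V) (W : Submodule F V) (hW : FiniteDimensional F W)
    (hrange : ∀ x : V, u x ∈ W)
    (htrace : LinearMap.trace F W (u.restrict fun x _ => hrange x) = 0) :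
    ∃ a b c : Module.End F V,
      a ^ 2 = 0 ∧ b ^ 2 = 0 ∧ c ^ 2 = 0 ∧ u = a + b + c := by
  have hu : u.rank < Cardinal.aleph0 :=
    (Submodule.rank_mono (Set.range_subset_iff.2 hrange)).trans_lt (Module.rank_lt_aleph0 F W)
  exact finite_rank_trace_zero_sum_three_square_zero_general
    ((Cardinal.mul_lt_aleph0 (Cardinal.natCast_lt_aleph0 (n := 3)) hu).le.trans
      (not_lt.1 (mt Module.rank_lt_aleph0_iff.1 hV))) hrange htrace
end
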